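/- For every integer n of the form n = 5·2^{k+1} − 8 with k ≥ 1, there exists a 6-connected maximal 1-plane graph G on n vertices whose underlying graph has crossing number cr(G) = (3/5)(n−2). (Consequently, the lower bound cr(G) ≥ (3n−6)/5 for 6-connected maximal 1-plane graphs is tight for infinitely many n.) -/

import Mathlib

open Set

/-- A drawing of a simple graph in the plane: each vertex is assigned a distinct point,
and each edge a continuous arc (an injective continuous curve) joining its endpoints. -/
structure Drawing {V : Type} (G : SimpleGraph V) where
  pos : V → ℝ × ℝ
  pos_inj : Function.Injective pos
  arc : ∀ ⦃u v : V⦄, G.Adj u v → Set (ℝ × ℝ)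
  arc_symm : ∀ ⦃u v : V⦄ (h : G.Adj u v), arc h.symm = arc h
  arc_isArc : ∀ ⦃u v : V⦄ (h : G.Adj u v), ∃ γ : ℝ → ℝ × ℝ,
    ContinuousOn γ (Set.Icc 0 1) ∧ Set.InjOn γ (Set.Icc 0 1) ∧
    γ 0 = pos u ∧ γ 1 = pos v ∧ arc h = γ '' Set.Icc (0 : ℝ) 1

namespace Drawing

variable {V : Type} {G : SimpleGraph V} (D : Drawing G)

/-- The interior of the arc of an edge (the arc minus its endpoints). -/
def arcInt ⦃u v : V⦄ (h : G.Adj u v) : Set (ℝ × ℝ) :=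
  D.arc h \ {D.pos u, D.pos v}

/-- The interior of the drawing of an abstract edge `e : Sym2 V`. -/
def edgeInt (e : Sym2 V) : Set (ℝ × ℝ) :=
  {p | ∃ (u v : V) (h : G.Adj u v), e = s(u, v) ∧ p ∈ D.arcInt h}

/-- Two edges cross if they are distinct and their interiors meet. -/
def Cross (e f : Sym2 V) : Prop :=
  e ≠ f ∧ (D.edgeInt e ∩ D.edgeInt f).Nonempty

/-- The set of crossing points of the drawing. -/
def crossingSet : Set (ℝ × ℝ) :=
  {p | ∃ e f : Sym2 V, e ≠ f ∧ p ∈ D.edgeInt e ∧ p ∈ D.edgeInt f}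

/-- A good drawing: no vertex lies on the arc of a non-incident edge, any two distinct
edges meet in at most one interior point, and edges sharing an endpoint do not cross. -/
def IsGood : Prop :=
  (∀ (w : V) ⦃u v : V⦄ (h : G.Adj u v), D.pos w ∈ D.arc h → w = u ∨ w = v) ∧
  (∀ e f : Sym2 V, e ≠ f → (D.edgeInt e ∩ D.edgeInt f).Subsingleton) ∧
  (∀ ⦃u v w : V⦄ (h₁ : G.Adj u v) (h₂ : G.Adj u w), v ≠ w →
    D.arcInt h₁ ∩ D.arcInt h₂ = ∅)

/-- A drawing is 1-planar if every edge is crossed at most once. -/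
def IsOnePlanar : Prop :=
  ∀ e : Sym2 V, {f : Sym2 V | D.Cross e f}.Subsingleton

/-- The number of crossings of the drawing (each unordered pair of crossing edges
contributes one crossing). -/
noncomputable def crNum : ℕ :=
  Set.ncard {p : Sym2 V × Sym2 V | D.Cross p.1 p.2} / 2

/-- The subset of the plane covered by the drawing. -/
def drawingSet : Set (ℝ × ℝ) :=
  Set.range D.pos ∪ ⋃ (u : V) (v : V) (h : G.Adj u v), D.arc h

/-- A face of the drawing: a connected component of the complement of the drawing. -/
def IsFace (F : Set (ℝ × ℝ)) : Prop :=
  ∃ p ∉ D.drawingSet, F = connectedComponentIn D.drawingSetᶜ p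

/-- The set `∂(F)` of vertices on the boundary of a face `F`. -/
def faceVerts (F : Set (ℝ × ℝ)) : Set V :=
  {v | D.pos v ∈ frontier F}

/-- A true face of the planarization `G^×`: a face of the drawing whose boundary
contains no crossing point (i.e. it is incident with no fake vertex). -/
def IsTrueFace (F : Set (ℝ × ℝ)) : Prop :=
  D.IsFace F ∧ ∀ p ∈ D.crossingSet, p ∉ frontier F

/-- Two faces are adjacent if their boundaries share a common edge of the planarization,
i.e. they share a boundary point that is neither a vertex nor a crossing point. -/
def FaceAdj (F₁ F₂ : Set (ℝ × ℝ)) : Prop :=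
  F₁ ≠ F₂ ∧ ∃ p, p ∈ frontier F₁ ∧ p ∈ frontier F₂ ∧
    p ∉ Set.range D.pos ∧ p ∉ D.crossingSet

/-- The planarization `G^×` (crossings made into vertices of degree `4`) is a
triangulation: every face of the drawing has exactly three vertices of `G^×`
(true vertices or crossing points) on its boundary. -/
def PlanarizationIsTriangulation : Prop :=
  ∀ F : Set (ℝ × ℝ), D.IsFace F →
    ((Set.range D.pos ∪ D.crossingSet) ∩ frontier F).ncard = 3

/-- A maximal 1-plane graph: the drawing is good and 1-planar, and no edge between two
distinct non-adjacent vertices can be added to the drawing so that the result is still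
a good 1-planar drawing. -/
def IsMaximalOnePlane : Prop :=
  D.IsGood ∧ D.IsOnePlanar ∧
  ∀ u v : V, u ≠ v → ¬G.Adj u v →
    ∀ D' : Drawing (G ⊔ SimpleGraph.fromEdgeSet {s(u, v)}),
      D'.pos = D.pos →
      (∀ ⦃x y : V⦄ (h : G.Adj x y),
        D'.arc ((SimpleGraph.sup_adj _ _ _ _).mpr (Or.inl h)) = D.arc h) →
      ¬(D'.IsGood ∧ D'.IsOnePlanar)

/-- A maximal 1-plane graph is immovable if its number of crossings does not exceed that
of any good 1-planar drawing obtained from it by redrawing exactly one edge. -/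
def Immovable : Prop :=
  ∀ D' : Drawing G, D'.IsGood → D'.IsOnePlanar → D'.pos = D.pos →
    (∃ (u v : V) (_ : G.Adj u v), ∀ ⦃x y : V⦄ (h' : G.Adj x y),
      s(x, y) ≠ s(u, v) → D'.arc h' = D.arc h') →
    D.crNum ≤ D'.crNum

/-- The drawing induced on a subgraph. -/
def restrict {H : SimpleGraph V} (hle : H ≤ G) : Drawing H where
  pos := D.pos
  pos_inj := D.pos_inj
  arc := fun _ _ h => D.arc (hle h)
  arc_symm := fun _ _ h => D.arc_symm (hle h)
  arc_isArc := fun _ _ h => D.arc_isArc (hle h)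

/-- `H` is a planar skeleton `G_P` of the 1-plane graph `(G, D)`: it is obtained from `G`
by removing exactly one edge from each pair of crossing edges. -/
def IsPlanarSkeleton {H : SimpleGraph V} (_ : H ≤ G) : Prop :=
  (∀ e f : Sym2 V, D.Cross e f → (e ∈ H.edgeSet ↔ f ∉ H.edgeSet)) ∧
  ∀ e ∈ G.edgeSet, (¬∃ f, D.Cross e f) → e ∈ H.edgeSet

/-- `c_G(v)`: the number of crossing edges of the drawing incident with `v`. -/
noncomputable def cDeg (v : V) : ℕ :=
  Set.ncard {w : V | G.Adj v w ∧ ∃ f, D.Cross s(v, w) f}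

end Drawing

/-- The crossing number of a graph: the least number of crossings in a good drawing. -/
noncomputable def crossingNumber {V : Type} (G : SimpleGraph V) : ℕ :=
  sInf {n | ∃ D : Drawing G, D.IsGood ∧ D.crNum = n}

/-- A graph is `k`-connected if it stays connected after deleting any set of fewer than
`k` vertices. -/
def KConnected {V : Type} (G : SimpleGraph V) (k : ℕ) : Prop :=
  ∀ S : Set V, S.ncard < k → (G.induce Sᶜ).Connected

/-- A graph is 1-planar if it admits a good 1-planar drawing. -/
def Is1Planar {V : Type} (G : SimpleGraph V) : Prop :=
  ∃ D : Drawing G, D.IsGood ∧ D.IsOnePlanar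

/-- A maximal 1-planar graph: 1-planar, and adding any edge between distinct
non-adjacent vertices destroys 1-planarity. -/
def IsMaximal1Planar {V : Type} (G : SimpleGraph V) : Prop :=
  Is1Planar G ∧ ∀ u v : V, u ≠ v → ¬G.Adj u v →
    ¬Is1Planar (G ⊔ SimpleGraph.fromEdgeSet {s(u, v)})

namespace VK

theorem exists_log {A : Type} [TopologicalSpace A] [SimplyConnectedSpace A]
    [LocallyPathConnectedSpace A] (a₀ : A) (f : A → ℂ) (hf : Continuous f) (h0 : ∀ a, f a ≠ 0) :
    ∃ L : A → ℂ, Continuous L ∧ ∀ a, Complex.exp (L a) = f a := by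
  obtain ⟨F, ⟨-, hF⟩, -⟩ := Complex.isCoveringMapOn_exp.existsUnique_continuousMap_lifts
    (A := A) ⟨f, hf⟩ (a₀ := a₀) (e₀ := Complex.log (f a₀)) (Complex.exp_log (h0 a₀))
    (fun a => by simpa using h0 a)
  exact ⟨F, F.continuous, fun a => congrFun hF a⟩

/-- `δ` is the total change of a continuous logarithm of `g` on `[0,1]`. -/
def IsD (g : ℝ → ℂ) (δ : ℂ) : Prop :=
  ∃ L : ℝ → ℂ, Continuous L ∧ (∀ t, Complex.exp (L t) = g t) ∧ L 1 - L 0 = δ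

theorem IsD.exists (g : ℝ → ℂ) (hg : Continuous g) (h0 : ∀ a, g a ≠ 0) : ∃ δ, IsD g δ := by
  obtain ⟨L, hL, h⟩ := exists_log (0 : ℝ) g hg h0
  exact ⟨_, L, hL, h, rfl⟩

theorem IsD.unique {g : ℝ → ℂ} {δ δ' : ℂ} (h : IsD g δ) (h' : IsD g δ') : δ = δ' := by
  obtain ⟨L, hL, hLg, rfl⟩ := h
  obtain ⟨M, hM, hMg, rfl⟩ := h'
  have hg : Continuous g := by
    have : g = fun t => Complex.exp (L t) := by ext t; rw [hLg]
    rw [this]; fun_prop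
  obtain ⟨F, -, hF⟩ := Complex.isCoveringMapOn_exp.existsUnique_continuousMap_lifts
    (A := ℝ) ⟨g, hg⟩ (a₀ := 0) (e₀ := L 0) (hLg 0)
    (fun a => by
      have : g a ≠ 0 := by rw [← hLg]; exact Complex.exp_ne_zero _
      simpa using this)
  have h1 := hF ⟨L, hL⟩ ⟨rfl, by ext t; simp [hLg]⟩
  have h2 := hF ⟨fun t => M t - M 0 + L 0, by fun_prop⟩ ⟨by simp, by
    ext t
    have e1 : Complex.exp (L 0) = Complex.exp (M 0) := by rw [hLg, hMg]
    simp only [ContinuousMap.coe_mk, Function.comp_apply, Complex.exp_add, Complex.exp_sub, e1,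
      hMg t]
    exact div_mul_cancel₀ _ (Complex.exp_ne_zero _)⟩
  have h3 := congrArg (fun f : C(ℝ, ℂ) => f 1) (h1.trans h2.symm)
  simp only [ContinuousMap.coe_mk] at h3
  rw [h3]; ring

theorem IsD.neg {g : ℝ → ℂ} {δ : ℂ} (h : IsD g δ) : IsD (fun t => - g t) δ := by
  obtain ⟨L, hL, hLg, rfl⟩ := h
  refine ⟨fun t => L t + Real.pi * Complex.I, by fun_prop, fun t => ?_, by ring⟩
  rw [Complex.exp_add, hLg, Complex.exp_pi_mul_I]; ring

theorem IsD.exp {g : ℝ → ℂ} {δ : ℂ} (h : IsD g δ) : Complex.exp δ * g 0 = g 1 := by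
  obtain ⟨L, hL, hLg, rfl⟩ := h
  rw [Complex.exp_sub, hLg, hLg, div_mul_cancel₀]
  rw [← hLg]; exact Complex.exp_ne_zero _

/-- The relation coming from a square `e × f`. -/
theorem square {γ η : ℝ → ℂ} (hγ : Continuous γ) (hη : Continuous η)
    (hd : ∀ s t, γ s ≠ η t) {d1 d2 d3 d4 : ℂ}
    (h1 : IsD (fun s => γ s - η 0) d1) (h2 : IsD (fun s => γ s - η 1) d2)
    (h3 : IsD (fun t => η t - γ 1) d3) (h4 : IsD (fun t => η t - γ 0) d4) :
    d1 - d2 + d3 - d4 = 0 := by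
  obtain ⟨L, hL, h⟩ := exists_log ((0, 0) : ℝ × ℝ) (fun p => γ p.1 - η p.2) (by fun_prop)
    (fun p => sub_ne_zero.mpr (hd _ _))
  have e1 := h1.unique ⟨fun s => L (s, 0), by fun_prop, fun t => h _, rfl⟩
  have e2 := h2.unique ⟨fun s => L (s, 1), by fun_prop, fun t => h _, rfl⟩
  have e3 := h3.neg.unique ⟨fun s => L (1, s), by fun_prop, fun t => by rw [h]; simp, rfl⟩
  have e4 := h4.neg.unique ⟨fun s => L (0, s), by fun_prop, fun t => by rw [h]; simp, rfl⟩
  rw [e1, e2, e3, e4]; ring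

def dl (x y : Fin 5) : ℤ := if x < y then 0 else 1

theorem vk5 (p : Fin 5 → ℂ) (A : Fin 5 → Fin 5 → Set ℂ)
    (hJ : ∀ i j, i < j → JoinedIn (A i j) (p i) (p j))
    (hd : ∀ i j k l, i < j → k < l → i ≠ k → i ≠ l → j ≠ k → j ≠ l →
      Disjoint (A i j) (A k l)) : False := by
  have hpath : ∀ i j, ∃ γ : ℝ → ℂ, i < j → (Continuous γ ∧ (∀ t, γ t ∈ A i j) ∧
      γ 0 = p i ∧ γ 1 = p j) := by
    intro i j
    by_cases h : i < j
    · obtain ⟨γ, hγ⟩ := hJ i j h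
      refine ⟨γ.extend, fun _ => ⟨γ.continuous_extend, fun t => ?_, by simp, by simp⟩⟩
      have : γ.extend t ∈ range γ.extend := ⟨t, rfl⟩
      rw [Path.extend_range] at this
      obtain ⟨s, hs⟩ := this
      rw [← hs]; exact hγ s
    · exact ⟨0, fun h' => absurd h' h⟩
  choose γ hγ using hpath
  have hmem0 : ∀ i j, i < j → p i ∈ A i j := fun i j h => by
    have := (hγ i j h).2.1 0; rwa [(hγ i j h).2.2.1] at this
  have hmem1 : ∀ i j, i < j → p j ∈ A i j := fun i j h => by
    have := (hγ i j h).2.1 1; rwa [(hγ i j h).2.2.2] at this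
  have hmem : ∀ c : Fin 5, ∀ i j : Fin 5, i < j → c ≠ i → c ≠ j → ∃ k l, k < l ∧
      i ≠ k ∧ i ≠ l ∧ j ≠ k ∧ j ≠ l ∧ (k = c ∨ l = c) := by decide
  have hne : ∀ i j, i < j → ∀ c, c ≠ i → c ≠ j → ∀ t, γ i j t - p c ≠ 0 := by
    intro i j hij c h1 h2 t h0
    obtain ⟨k, l, hkl, a1, a2, a3, a4, hc⟩ := hmem c i j hij h1 h2
    have hdis := hd i j k l hij hkl a1 a2 a3 a4
    have hm := (hγ i j hij).2.1 t
    rw [sub_eq_zero.mp h0] at hm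
    refine Set.disjoint_left.mp hdis hm ?_
    rcases hc with rfl | rfl
    · exact hmem0 _ _ hkl
    · exact hmem1 _ _ hkl
  have hpn : ∀ i j, i ≠ j → p i - p j ≠ 0 := by
    intro i j hij
    have : ∀ i j : Fin 5, i ≠ j → ∃ k, (i < k ∧ j ≠ i ∧ j ≠ k) ∨ (k < i ∧ j ≠ i ∧ j ≠ k) := by
      decide
    obtain ⟨k, h | h⟩ := this i j hij
    · have := hne i k h.1 j h.2.1 h.2.2 0
      rwa [(hγ i k h.1).2.2.1] at this
    · have := hne k i h.1 j h.2.2 h.2.1 1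
      rwa [(hγ k i h.1).2.2.2] at this
  have hD : ∀ i j c, ∃ δ, (i < j → c ≠ i → c ≠ j → IsD (fun s => γ i j s - p c) δ) := by
    intro i j c
    by_cases h : i < j ∧ c ≠ i ∧ c ≠ j
    · obtain ⟨δ, hδ⟩ := IsD.exists (fun s => γ i j s - p c)
        ((hγ i j h.1).1.sub continuous_const) (hne i j h.1 c h.2.1 h.2.2)
      exact ⟨δ, fun _ _ _ => hδ⟩
    · exact ⟨0, fun a b c => absurd ⟨a, b, c⟩ h⟩
  choose δ hδ using hD
  let ℓ : Fin 5 → Fin 5 → ℂ := fun i j =>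
    Complex.log (p (min i j) - p (max i j)) + (dl i j : ℂ) * (Real.pi * Complex.I)
  have hℓ : ∀ i j, i ≠ j → Complex.exp (ℓ i j) = p i - p j := by
    intro i j hij
    rcases lt_or_gt_of_ne hij with h | h
    · simp only [ℓ, min_eq_left h.le, max_eq_right h.le, dl, h, if_true, Int.cast_zero, zero_mul,
        add_zero]
      exact Complex.exp_log (hpn _ _ hij)
    · simp only [ℓ, min_eq_right h.le, max_eq_left h.le, dl, not_lt.mpr h.le, if_false,
        Int.cast_one, one_mul, Complex.exp_add, Complex.exp_pi_mul_I,
        Complex.exp_log (hpn _ _ hij.symm)]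
      ring
  have hN : ∀ i j c, ∃ N : ℤ, (i < j → c ≠ i → c ≠ j →
      δ i j c = ℓ j c - ℓ i c + N * (2 * Real.pi * Complex.I)) := by
    intro i j c
    by_cases h : i < j ∧ c ≠ i ∧ c ≠ j
    · have h1 := (hδ i j c h.1 h.2.1 h.2.2).exp
      rw [(hγ i j h.1).2.2.1, (hγ i j h.1).2.2.2, ← hℓ i c h.2.1.symm, ← hℓ j c h.2.2.symm,
        ← Complex.exp_add, Complex.exp_eq_exp_iff_exists_int] at h1
      obtain ⟨N, hN⟩ := h1
      exact ⟨N, fun _ _ _ => by linear_combination hN⟩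
    · exact ⟨0, fun a b c => absurd ⟨a, b, c⟩ h⟩
  choose N hN using hN
  have key : ∀ a b c d : Fin 5, a < b → c < d → a ≠ c → a ≠ d → b ≠ c → b ≠ d →
      2 * (N a b c - N a b d + N c d b - N c d a) + (dl b c - dl c b) - (dl a c - dl c a)
        - (dl b d - dl d b) + (dl a d - dl d a) = 0 := by
    intro a b c d hab hcd hac had hbc hbd
    have hs := square (hγ a b hab).1 (hγ c d hcd).1
      (fun s t h => Set.disjoint_left.mp (hd a b c d hab hcd hac had hbc hbd)
        ((hγ a b hab).2.1 s) (h ▸ (hγ c d hcd).2.1 t))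
      (d1 := δ a b c) (d2 := δ a b d) (d3 := δ c d b) (d4 := δ c d a)
      (by rw [(hγ c d hcd).2.2.1]; exact hδ a b c hab hac.symm hbc.symm)
      (by rw [(hγ c d hcd).2.2.2]; exact hδ a b d hab had.symm hbd.symm)
      (by rw [(hγ a b hab).2.2.2]; exact hδ c d b hcd hbc hbd)
      (by rw [(hγ a b hab).2.2.1]; exact hδ c d a hcd hac had)
    rw [hN a b c hab hac.symm hbc.symm, hN a b d hab had.symm hbd.symm,
      hN c d b hcd hbc hbd, hN c d a hcd hac had] at hs
    have hpi : ((Real.pi : ℂ) * Complex.I) ≠ 0 :=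
      mul_ne_zero (by exact_mod_cast Real.pi_ne_zero) Complex.I_ne_zero
    have : ((2 * (N a b c - N a b d + N c d b - N c d a) + (dl b c - dl c b) - (dl a c - dl c a)
        - (dl b d - dl d b) + (dl a d - dl d a) : ℤ) : ℂ) = 0 := by
      apply mul_right_cancel₀ hpi
      simp only [ℓ, min_comm c, max_comm c, min_comm d, max_comm d] at hs
      push_cast
      linear_combination hs
    exact_mod_cast this
  have k1 := key 0 1 2 3 (by decide) (by decide) (by decide) (by decide) (by decide) (by decide)
  have k2 := key 0 1 2 4 (by decide) (by decide) (by decide) (by decide) (by decide) (by decide)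
  have k3 := key 0 1 3 4 (by decide) (by decide) (by decide) (by decide) (by decide) (by decide)
  have k4 := key 0 2 1 3 (by decide) (by decide) (by decide) (by decide) (by decide) (by decide)
  have k5 := key 0 2 1 4 (by decide) (by decide) (by decide) (by decide) (by decide) (by decide)
  have k6 := key 0 2 3 4 (by decide) (by decide) (by decide) (by decide) (by decide) (by decide)
  have k7 := key 0 3 1 2 (by decide) (by decide) (by decide) (by decide) (by decide) (by decide)
  have k8 := key 0 3 1 4 (by decide) (by decide) (by decide) (by decide) (by decide) (by decide)
  have k9 := key 0 3 2 4 (by decide) (by decide) (by decide) (by decide) (by decide) (by decide)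
  have k10 := key 0 4 1 2 (by decide) (by decide) (by decide) (by decide) (by decide) (by decide)
  have k11 := key 0 4 1 3 (by decide) (by decide) (by decide) (by decide) (by decide) (by decide)
  have k12 := key 0 4 2 3 (by decide) (by decide) (by decide) (by decide) (by decide) (by decide)
  have k13 := key 1 2 3 4 (by decide) (by decide) (by decide) (by decide) (by decide) (by decide)
  have k14 := key 1 3 2 4 (by decide) (by decide) (by decide) (by decide) (by decide) (by decide)
  have k15 := key 1 4 2 3 (by decide) (by decide) (by decide) (by decide) (by decide) (by decide)
  simp [dl] at k1 k2 k3 k4 k5 k6 k7 k8 k9 k10 k11 k12 k13 k14 k15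
  omega

end VK
namespace VK

open Classical in
/-- Graphs with a drawing in which independent edges are disjoint. -/
def Cls {V : Type} (G : SimpleGraph V) : Prop :=
  ∃ (p : V → ℂ) (A : Sym2 V → Set ℂ),
    (∀ u v, G.Adj u v → JoinedIn (A s(u, v)) (p u) (p v)) ∧
    (∀ u v a b, G.Adj u v → G.Adj a b → u ≠ a → u ≠ b → v ≠ a → v ≠ b →
      Disjoint (A s(u, v)) (A s(a, b)))

theorem Cls.mono {V : Type} {G H : SimpleGraph V} (h : Cls G) (hle : H ≤ G) : Cls H := by
  obtain ⟨p, A, h1, h2⟩ := h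
  exact ⟨p, A, fun u v h => h1 u v (hle h), fun u v a b h h' => h2 u v a b (hle h) (hle h')⟩

theorem Cls.noK5 {V : Type} {G : SimpleGraph V} (h : Cls G) (f : Fin 5 → V)
    (hf : ∀ i j, i < j → G.Adj (f i) (f j)) : False := by
  obtain ⟨p, A, h1, h2⟩ := h
  have hadj : ∀ i j, i ≠ j → G.Adj (f i) (f j) := by
    intro i j hij
    rcases lt_or_gt_of_ne hij with h | h
    · exact hf i j h
    · exact (hf j i h).symm
  refine vk5 (fun i => p (f i)) (fun i j => A s(f i, f j)) (fun i j hij => h1 _ _ (hf i j hij)) ?_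
  intro i j k l hij hkl h3 h4 h5 h6
  exact h2 _ _ _ _ (hf i j hij) (hf k l hkl) (hadj _ _ h3).ne (hadj _ _ h4).ne (hadj _ _ h5).ne
    (hadj _ _ h6).ne

/-- Contract `v` into `x`. -/
def contr {V : Type} (G : SimpleGraph V) (x v : V) : SimpleGraph V where
  Adj a b := a ≠ b ∧ a ≠ v ∧ b ≠ v ∧ (G.Adj a b ∨ (a = x ∧ G.Adj v b) ∨ (b = x ∧ G.Adj v a))
  symm := ⟨by
    rintro a b ⟨h1, h2, h3, h4⟩
    refine ⟨h1.symm, h3, h2, ?_⟩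
    rcases h4 with h | h | h
    · exact Or.inl h.symm
    · exact Or.inr (Or.inr h)
    · exact Or.inr (Or.inl h)⟩
  loopless := ⟨fun a h => h.1 rfl⟩

open Classical in
theorem Cls.contr {V : Type} {G : SimpleGraph V} (h : Cls G) (x v : V) (hxv : G.Adj x v) :
    Cls (VK.contr G x v) := by
  obtain ⟨p, A, h1, h2⟩ := h
  refine ⟨p, fun e => if e ∈ G.edgeSet then A e else
    A s(v, x) ∪ ⋃ y ∈ {y | y ∈ e ∧ y ≠ x}, A s(v, y), ?_, ?_⟩
  · intro a b hab
    obtain ⟨hne, hav, hbv, h⟩ := hab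
    simp only [SimpleGraph.mem_edgeSet]
    split_ifs with hG
    · exact h1 a b hG
    · have key : ∀ c, G.Adj v c → c ≠ x → JoinedIn (A s(v, x) ∪ A s(v, c)) (p x) (p c) := by
        intro c hc hcx
        have e1 := (h1 v x hxv.symm).symm.mono (V := A s(v, x) ∪ A s(v, c)) subset_union_left
        have e2 := (h1 v c hc).mono (V := A s(v, x) ∪ A s(v, c)) subset_union_right
        exact e1.trans e2
      rcases h with h | ⟨rfl, h⟩ | ⟨rfl, h⟩
      · exact absurd h hG
      · refine (key b h hne.symm).mono (union_subset_union_right _ ?_)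
        exact subset_biUnion_of_mem (u := fun y => A s(v, y)) ⟨by simp, hne.symm⟩
      · refine (key a h hne).symm.mono (union_subset_union_right _ ?_)
        exact subset_biUnion_of_mem (u := fun y => A s(v, y)) ⟨by simp, hne⟩
  · -- key disjointness
    have key : ∀ a b c d, (VK.contr G x v).Adj a b → ¬ G.Adj a b → (VK.contr G x v).Adj c d →
        a ≠ c → a ≠ d → b ≠ c → b ≠ d →
        Disjoint (A s(v, x) ∪ ⋃ y ∈ {y | y ∈ s(a, b) ∧ y ≠ x}, A s(v, y))
          (if s(c, d) ∈ G.edgeSet then A s(c, d) else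
            A s(v, x) ∪ ⋃ y ∈ {y | y ∈ s(c, d) ∧ y ≠ x}, A s(v, y)) := by
      intro a b c d hab hnab hcd h3 h4 h5 h6
      obtain ⟨hne, hav, hbv, h⟩ := hab
      obtain ⟨hne', hcv, hdv, h'⟩ := hcd
      have hx : c ≠ x ∧ d ≠ x ∧ ∃ y, G.Adj v y ∧ (y = a ∨ y = b) ∧
          ∀ z, z ∈ s(a, b) → z ≠ x → z = y := by
        rcases h with h | ⟨rfl, h⟩ | ⟨rfl, h⟩
        · exact absurd h hnab
        · refine ⟨h3.symm, h4.symm, b, h, Or.inr rfl, ?_⟩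
          intro z hz hzx
          rcases Sym2.mem_iff.1 hz with rfl | rfl
          · exact absurd rfl hzx
          · rfl
        · refine ⟨h5.symm, h6.symm, a, h, Or.inl rfl, ?_⟩
          intro z hz hzx
          rcases Sym2.mem_iff.1 hz with rfl | rfl
          · rfl
          · exact absurd rfl hzx
      obtain ⟨hcx, hdx, y, hy, hyab, hyz⟩ := hx
      have hG : G.Adj c d := by
        rcases h' with h | ⟨rfl, h⟩ | ⟨rfl, h⟩
        · exact h
        · exact absurd rfl hcx
        · exact absurd rfl hdx
      rw [if_pos (by simpa using hG)]
      have hyc : y ≠ c ∧ y ≠ d := by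
        rcases hyab with rfl | rfl
        · exact ⟨h3, h4⟩
        · exact ⟨h5, h6⟩
      refine Disjoint.union_left (h2 _ _ _ _ hxv.symm hG hcv.symm hdv.symm hcx.symm hdx.symm) ?_
      simp only [disjoint_iUnion_left]
      rintro z ⟨hz, hzx⟩
      obtain rfl := hyz z hz hzx
      exact h2 _ _ _ _ hy hG hcv.symm hdv.symm hyc.1 hyc.2
    intro a b c d hab hcd h3 h4 h5 h6
    by_cases hG : G.Adj a b
    · by_cases hG' : G.Adj c d
      · simp only [SimpleGraph.mem_edgeSet, hG, hG', if_true]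
        exact h2 _ _ _ _ hG hG' h3 h4 h5 h6
      · have := key c d a b hcd hG' hab h3.symm h5.symm h4.symm h6.symm
        simp only [SimpleGraph.mem_edgeSet, hG', if_false]
        exact this.symm
    · have := key a b c d hab hG hcd h3 h4 h5 h6
      simp only [SimpleGraph.mem_edgeSet, hG, if_false]
      exact this

open Classical in
theorem Cls.bound {V : Type} [Fintype V] (n : ℕ) : ∀ (G : SimpleGraph V) (s : Finset V),
    Cls G → (∀ u v, G.Adj u v → u ∈ s) → s.card = n + 3 →
    G.edgeFinset.card ≤ 3 * n + 3 := by
  induction n with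
  | zero =>
    intro G s _ hs hc
    have h1 := G.sum_degrees_eq_twice_card_edges
    have h2 : ∑ v, G.degree v = ∑ v ∈ s, G.degree v := by
      symm
      apply Finset.sum_subset (Finset.subset_univ _)
      intro x _ hx
      rw [← G.card_neighborFinset_eq_degree]
      rw [Finset.card_eq_zero, Finset.eq_empty_iff_forall_notMem]
      intro y hy
      exact hx (hs x y (by simpa using hy))
    have h3 : ∑ v ∈ s, G.degree v ≤ ∑ v ∈ s, 2 := by
      apply Finset.sum_le_sum
      intro v hv
      rw [← G.card_neighborFinset_eq_degree]
      have : G.neighborFinset v ⊆ s.erase v := by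
        intro y hy
        have hy : G.Adj v y := by simpa using hy
        exact Finset.mem_erase.2 ⟨hy.ne', hs y v hy.symm⟩
      have := Finset.card_le_card this
      rw [Finset.card_erase_of_mem hv] at this
      omega
    simp only [Finset.sum_const, smul_eq_mul] at h3
    omega
  | succ n ih =>
    intro G₀ s hG₀ hs₀ hc
    by_contra! hlt
    obtain ⟨E, hE, hEc⟩ := Finset.exists_subset_card_eq (s := G₀.edgeFinset) (n := 3 * n + 7)
      (by omega)
    obtain ⟨G, hGle, hGc⟩ : ∃ G ≤ G₀, G.edgeFinset.card = 3 * n + 7 := by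
      refine ⟨SimpleGraph.fromEdgeSet (E : Set (Sym2 V)), ?_, ?_⟩
      · intro a b hab
        simp only [SimpleGraph.fromEdgeSet_adj] at hab
        have := hE hab.1
        simpa using this
      · rw [← hEc]
        congr 1
        ext e
        simp only [SimpleGraph.mem_edgeFinset, SimpleGraph.edgeSet_fromEdgeSet, Set.mem_sdiff,
          Finset.mem_coe]
        constructor
        · exact fun h => h.1
        · intro h
          refine ⟨h, ?_⟩
          have := hE h
          exact G₀.not_isDiag_of_mem_edgeSet (by simpa using this)
    have hG := hG₀.mono hGle
    have hs : ∀ u v, G.Adj u v → u ∈ s := fun u v h => hs₀ u v (hGle h)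
    clear hs₀ hG₀ hEc hE hlt hGle
    -- low degree vertex
    obtain ⟨v, hv, hd⟩ : ∃ v ∈ s, G.degree v ≤ 5 := by
      by_contra! hcon
      have h3 : ∑ v ∈ s, 6 ≤ ∑ v ∈ s, G.degree v := Finset.sum_le_sum fun i hi => hcon i hi
      have h1 := G.sum_degrees_eq_twice_card_edges
      have h2 : ∑ v ∈ s, G.degree v ≤ ∑ v, G.degree v :=
        Finset.sum_le_sum_of_subset (Finset.subset_univ _)
      simp only [Finset.sum_const, smul_eq_mul] at h3
      omega
    have hsc : (s.erase v).card = n + 3 := by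
      rw [Finset.card_erase_of_mem hv]; omega
    have hdel : ∀ [Fintype (G.deleteIncidenceSet v).edgeSet],
        (G.deleteIncidenceSet v).edgeFinset.card = 3 * n + 7 - G.degree v := by
      intro inst
      rw [← hGc, ← G.card_edgeFinset_deleteIncidenceSet v]
      convert rfl
    have hdeladj : ∀ a b, (G.deleteIncidenceSet v).Adj a b ↔ G.Adj a b ∧ a ≠ v ∧ b ≠ v := by
      intro a b
      rw [SimpleGraph.deleteIncidenceSet_adj]
    by_cases hd3 : G.degree v ≤ 3
    · have := ih (G.deleteIncidenceSet v) (s.erase v) (hG.mono (fun a b h => ((hdeladj a b).1 h).1))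
        (fun a b h => by
          rw [hdeladj] at h
          exact Finset.mem_erase.2 ⟨h.2.1, hs a b h.1⟩) hsc
      have h9 := @hdel (@SimpleGraph.fintypeEdgeSet V _ _ (fun a b => propDecidable _))
      have := h9.symm.trans_le this
      omega
    by_cases hcom : ∃ x, G.Adj v x ∧
        (G.neighborFinset v ∩ G.neighborFinset x).card ≤ 2
    · obtain ⟨x, hvx, hcard⟩ := hcom
      have := ih (VK.contr G x v) (s.erase v) (hG.contr x v hvx.symm) (by
        rintro a b ⟨h1, h2, h3, h4⟩
        refine Finset.mem_erase.2 ⟨h2, ?_⟩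
        rcases h4 with h | ⟨rfl, h⟩ | ⟨rfl, h⟩
        · exact hs a b h
        · exact hs a v hvx.symm
        · exact hs a v h.symm) hsc
      have hsub : (G.deleteIncidenceSet v).edgeFinset ∪
          (((G.neighborFinset v).erase x) \ G.neighborFinset x).image (fun y => s(x, y)) ⊆
          (VK.contr G x v).edgeFinset := by
        intro e he
        rw [Finset.mem_union] at he
        rcases he with he | he
        · induction e with
          | _ a b =>
            simp only [SimpleGraph.mem_edgeFinset, SimpleGraph.mem_edgeSet] at he ⊢
            rw [hdeladj] at he
            exact ⟨he.1.ne, he.2.1, he.2.2, Or.inl he.1⟩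
        · simp only [Finset.mem_image, Finset.mem_sdiff, Finset.mem_erase,
            SimpleGraph.mem_neighborFinset] at he
          obtain ⟨y, ⟨⟨hyx, hvy⟩, hxy⟩, rfl⟩ := he
          simp only [SimpleGraph.mem_edgeFinset, SimpleGraph.mem_edgeSet]
          exact ⟨hyx.symm, hvx.ne', hvy.ne', Or.inr (Or.inl ⟨rfl, hvy⟩)⟩
      have hcc := Finset.card_le_card hsub
      rw [Finset.card_union_of_disjoint, Finset.card_image_of_injOn, hdel] at hcc
      · have e1 : (G.neighborFinset v).card = G.degree v := rfl
        have e2 := Finset.card_erase_of_mem (s := G.neighborFinset v) (a := x) (by simpa using hvx)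
        have e3 := Finset.card_sdiff_add_card_inter ((G.neighborFinset v).erase x)
          (G.neighborFinset x)
        have e4 : ((G.neighborFinset v).erase x ∩ G.neighborFinset x).card ≤
            (G.neighborFinset v ∩ G.neighborFinset x).card :=
          Finset.card_le_card (Finset.inter_subset_inter_right (Finset.erase_subset _ _))
        omega
      · intro a ha b hb hab
        exact Sym2.congr_right.1 hab
      · rw [Finset.disjoint_left]
        intro e he he'
        simp only [Finset.mem_image, Finset.mem_sdiff, Finset.mem_erase,
            SimpleGraph.mem_neighborFinset] at he'
        obtain ⟨y, ⟨⟨hyx, hvy⟩, hxy⟩, rfl⟩ := he'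
        simp only [SimpleGraph.mem_edgeFinset, SimpleGraph.mem_edgeSet] at he
        rw [hdeladj] at he
        exact hxy he.1
    · push Not at hcom
      have hN : (G.neighborFinset v).card = G.degree v := rfl
      -- each neighbour misses few
      have hmiss : ∀ x, G.Adj v x →
          ((G.neighborFinset v).erase x \ G.neighborFinset x).card ≤ G.degree v - 4 := by
        intro x hx
        have h1 := hcom x hx
        have e2 := Finset.card_erase_of_mem (s := G.neighborFinset v) (a := x) (by simpa using hx)
        have e3 := Finset.card_sdiff_add_card_inter ((G.neighborFinset v).erase x)
          (G.neighborFinset x)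
        have e4 : (G.neighborFinset v).erase x ∩ G.neighborFinset x =
            (G.neighborFinset v ∩ G.neighborFinset x) := by
          ext y
          simp only [Finset.mem_inter, Finset.mem_erase, SimpleGraph.mem_neighborFinset]
          constructor
          · rintro ⟨⟨_, h⟩, h'⟩; exact ⟨h, h'⟩
          · rintro ⟨h, h'⟩; exact ⟨⟨h'.ne', h⟩, h'⟩
        rw [e4] at e3
        omega
      have hmiss1 : ∀ x y z, G.Adj v x → G.Adj v y → G.Adj v z → y ≠ x → z ≠ x → y ≠ z →
          ¬ G.Adj x y → G.Adj x z := by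
        intro x y z hx hy hz hyx hzx hyz hxy
        by_contra hxz
        have h1 : ({y, z} : Finset V) ⊆ (G.neighborFinset v).erase x \ G.neighborFinset x := by
          intro w hw
          simp only [Finset.mem_insert, Finset.mem_singleton] at hw
          rcases hw with rfl | rfl <;> simp [*]
        have h2 := Finset.card_le_card h1
        rw [Finset.card_pair hyz] at h2
        have := hmiss x hx
        omega
      by_cases hall : ∀ a b, G.Adj v a → G.Adj v b → a ≠ b → G.Adj a b
      · obtain ⟨T, hT, hTc⟩ := Finset.exists_subset_card_eq (s := G.neighborFinset v) (n := 4)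
          (by omega)
        obtain ⟨x, y, z, w, h1, h2, h3, h4, h5, h6, rfl⟩ := Finset.card_eq_four.1 hTc
        have hx : G.Adj v x := by simpa using hT (show x ∈ _ by simp)
        have hy : G.Adj v y := by simpa using hT (show y ∈ _ by simp)
        have hz : G.Adj v z := by simpa using hT (show z ∈ _ by simp)
        have hw : G.Adj v w := by simpa using hT (show w ∈ _ by simp)
        apply hG.noK5 ![v, x, y, z, w]
        intro i j hij
        fin_cases i <;> fin_cases j <;> first
          | (exfalso; revert hij; decide)
          | simp [*]
      · push Not at hall
        obtain ⟨a, b, ha, hb, hab, hnab⟩ := hall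
        have hd5 : G.degree v = 5 := by
          by_contra hne
          have := hmiss a ha
          have h0 : ((G.neighborFinset v).erase a \ G.neighborFinset a).card = 0 := by omega
          rw [Finset.card_eq_zero] at h0
          have : b ∈ (G.neighborFinset v).erase a \ G.neighborFinset a := by
            simp [hb, hnab, hab.symm]
          rw [h0] at this
          simp at this
        have h3 : (((G.neighborFinset v).erase a).erase b).card = 3 := by
          rw [Finset.card_erase_of_mem (by simp [hab.symm, hb]),
            Finset.card_erase_of_mem (by simp [ha])]
          omega
        obtain ⟨x, y, z, hxy, hxz, hyz, hT⟩ := Finset.card_eq_three.1 h3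
        have hmem : ∀ w, w = x ∨ w = y ∨ w = z → w ≠ b ∧ w ≠ a ∧ G.Adj v w := by
          intro w hw
          have : w ∈ ((G.neighborFinset v).erase a).erase b := by
            rw [hT]; simpa using hw
          simpa using this
        obtain ⟨hxb, hxa, hvx⟩ := hmem x (by simp)
        obtain ⟨hyb, hya, hvy⟩ := hmem y (by simp)
        obtain ⟨hzb, hza, hvz⟩ := hmem z (by simp)
        have hnba : ¬ G.Adj b a := fun h => hnab h.symm
        have haw : ∀ w, w ≠ b → w ≠ a → G.Adj v w → G.Adj a w ∧ G.Adj b w := fun w h1 h2 h3 =>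
          ⟨hmiss1 a b w ha hb h3 hab.symm h2 h1.symm hnab,
            hmiss1 b a w hb ha h3 hab h1 h2.symm hnba⟩
        -- pick e adjacent to others
        have fin : ∀ c d e, c ≠ b → c ≠ a → G.Adj v c → d ≠ b → d ≠ a → G.Adj v d →
            e ≠ b → e ≠ a → G.Adj v e → c ≠ d → c ≠ e → d ≠ e → G.Adj c e → G.Adj d e →
            False := by
          intro c d e hcb hca hvc hdb hda hvd heb hea hve hcd hce hde hce' hde'
          obtain ⟨hac, hbc⟩ := haw c hcb hca hvc
          obtain ⟨had, hbd⟩ := haw d hdb hda hvd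
          obtain ⟨hae, hbe⟩ := haw e heb hea hve
          apply (hG.contr c a hac.symm).noK5 ![v, b, c, d, e]
          have hva : v ≠ a := ha.ne
          have hvb := hb.ne
          have hvc' := hvc.ne
          have hvd' := hvd.ne
          have hve' := hve.ne
          intro i j hij
          fin_cases i <;> fin_cases j <;> first
            | (exfalso; revert hij; decide)
            | simp [VK.contr, *, Ne.symm hab, hcb.symm, hdb.symm, heb.symm]
        by_cases h1 : G.Adj x y
        · by_cases h2 : G.Adj x z
          · exact fin y z x hyb hya hvy hzb hza hvz hxb hxa hvx hyz hxy.symm hxz.symm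
              h1.symm h2.symm
          · exact fin x z y hxb hxa hvx hzb hza hvz hyb hya hvy hxz hxy hyz.symm
              h1 (hmiss1 z x y hvz hvx hvy hxz hyz hxy (fun h => h2 h.symm))
        · exact fin x y z hxb hxa hvx hyb hya hvy hzb hza hvz hxy hxz hyz
            (hmiss1 x y z hvx hvy hvz hxy.symm hxz.symm hyz h1)
            (hmiss1 y x z hvy hvx hvz hxy hyz.symm hxz (fun h => h1 h.symm))

end VK
namespace VK

open Classical in
theorem Cls.ncard_bound {V : Type} [Fintype V] {G : SimpleGraph V} (hG : Cls G)
    (h3 : 3 ≤ Fintype.card V) : G.edgeSet.ncard + 6 ≤ 3 * Fintype.card V := by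
  have := Cls.bound (Fintype.card V - 3) G Finset.univ hG (fun u v _ => Finset.mem_univ _)
    (by rw [Finset.card_univ]; omega)
  rw [← SimpleGraph.coe_edgeFinset, Set.ncard_coe_finset]
  omega

theorem cls_of_plane {V : Type} {G : SimpleGraph V} (p : V → ℝ × ℝ) (A : Sym2 V → Set (ℝ × ℝ))
    (h1 : ∀ u v, G.Adj u v → JoinedIn (A s(u, v)) (p u) (p v))
    (h2 : ∀ u v a b, G.Adj u v → G.Adj a b → u ≠ a → u ≠ b → v ≠ a → v ≠ b →
      Disjoint (A s(u, v)) (A s(a, b))) : Cls G := by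
  let φ : ℝ × ℝ → ℂ := Complex.equivRealProdCLM.symm
  have hφ : Continuous φ := Complex.equivRealProdCLM.symm.continuous
  have hi : Function.Injective φ := Complex.equivRealProdCLM.symm.injective
  refine ⟨fun v => φ (p v), fun e => φ '' (A e), ?_, ?_⟩
  · intro u v h
    obtain ⟨γ, hγ⟩ := h1 u v h
    exact ⟨γ.map hφ, fun t => ⟨γ t, hγ t, rfl⟩⟩
  · intro u v a b h h' h3 h4 h5 h6
    exact (Set.disjoint_image_iff hi).2 (h2 u v a b h h' h3 h4 h5 h6)

theorem joinedIn_of_curve {γ : ℝ → ℝ × ℝ} (a b : ℝ) (hab : a ≤ b)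
    (hγ : ContinuousOn γ (Icc a b)) : JoinedIn (γ '' Icc a b) (γ a) (γ b) := by
  have hpc : IsPathConnected (γ '' Icc a b) :=
    ((convex_Icc a b).isPathConnected ⟨a, left_mem_Icc.2 hab⟩).image' hγ
  exact hpc.joinedIn _ ⟨a, left_mem_Icc.2 hab, rfl⟩ _ ⟨b, right_mem_Icc.2 hab, rfl⟩

section

variable {V : Type} {G : SimpleGraph V} (D : Drawing G)

theorem arc_joined {u v : V} (h : G.Adj u v) : JoinedIn (D.arc h) (D.pos u) (D.pos v) := by
  obtain ⟨γ, hc, _, h0, h1, he⟩ := D.arc_isArc h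
  rw [he, ← h0, ← h1]
  exact joinedIn_of_curve 0 1 zero_le_one hc

theorem arc_half {u v : V} (h : G.Adj u v) {x : ℝ × ℝ} (hx : x ∈ D.arcInt h) :
    ∃ T ⊆ D.arc h, JoinedIn T (D.pos u) x ∧ D.pos v ∉ T := by
  obtain ⟨γ, hc, hi, h0, h1, he⟩ := D.arc_isArc h
  obtain ⟨hx1, hx2⟩ := hx
  rw [he] at hx1
  obtain ⟨t, ht, rfl⟩ := hx1
  have ht1 : t ≠ 1 := by
    rintro rfl
    exact hx2 (by simp [h1])
  have hsub : Icc 0 t ⊆ Icc (0 : ℝ) 1 := Icc_subset_Icc_right ht.2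
  refine ⟨γ '' Icc 0 t, ?_, ?_, ?_⟩
  · rw [he]; exact image_mono hsub
  · rw [← h0]; exact joinedIn_of_curve 0 t ht.1 (hc.mono hsub)
  · rintro ⟨s, hs, hs1⟩
    rw [← h1] at hs1
    have := hi (hsub hs) (right_mem_Icc.2 zero_le_one) hs1
    have h2 := hs.2
    have h3 := ht.2
    exact ht1 (le_antisymm h3 (this ▸ h2))

theorem arc_congr {u v a b : V} (h : G.Adj u v) (h' : G.Adj a b) (he : s(u, v) = s(a, b)) :
    D.arc h = D.arc h' := by
  rcases Sym2.eq_iff.1 he with ⟨rfl, rfl⟩ | ⟨rfl, rfl⟩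
  · rfl
  · exact D.arc_symm h'

theorem arcInt_congr {u v a b : V} (h : G.Adj u v) (h' : G.Adj a b) (he : s(u, v) = s(a, b)) :
    D.arcInt h = D.arcInt h' := by
  unfold Drawing.arcInt
  rw [arc_congr D h h' he]
  rcases Sym2.eq_iff.1 he with ⟨rfl, rfl⟩ | ⟨rfl, rfl⟩
  · rfl
  · rw [Set.pair_comm]

theorem edgeInt_eq {u v : V} (h : G.Adj u v) : D.edgeInt s(u, v) = D.arcInt h := by
  ext x
  constructor
  · rintro ⟨a, b, h', he, hx⟩
    rwa [arcInt_congr D h h' he]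
  · intro hx
    exact ⟨u, v, h, rfl, hx⟩

theorem cross_mem {e f : Sym2 V} (h : D.Cross e f) : e ∈ G.edgeSet ∧ f ∈ G.edgeSet := by
  obtain ⟨_, x, ⟨a, b, h1, rfl, _⟩, ⟨c, d, h2, rfl, _⟩⟩ := h
  exact ⟨h1, h2⟩

theorem cross_symm {e f : Sym2 V} (h : D.Cross e f) : D.Cross f e :=
  ⟨h.1.symm, by rw [Set.inter_comm]; exact h.2⟩

/-- the arc of an abstract edge -/
def arcSet (e : Sym2 V) : Set (ℝ × ℝ) := {x | ∃ (u v : V) (h : G.Adj u v), e = s(u, v) ∧ x ∈ D.arc h}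

theorem arcSet_eq {u v : V} (h : G.Adj u v) : arcSet D s(u, v) = D.arc h := by
  ext x
  constructor
  · rintro ⟨a, b, h', he, hx⟩
    rwa [arc_congr D h h' he]
  · intro hx
    exact ⟨u, v, h, rfl, hx⟩

theorem indep_disjoint (hD : D.IsGood) {u v a b : V} (h : G.Adj u v) (h' : G.Adj a b)
    (h1 : u ≠ a) (h2 : u ≠ b) (h3 : v ≠ a) (h4 : v ≠ b) (hc : ¬ D.Cross s(u, v) s(a, b)) :
    Disjoint (D.arc h) (D.arc h') := by
  rw [Set.disjoint_left]
  intro x hx hx'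
  apply hc
  refine ⟨?_, x, ?_, ?_⟩
  · intro he
    rcases Sym2.eq_iff.1 he with ⟨rfl, rfl⟩ | ⟨rfl, rfl⟩
    · exact h1 rfl
    · exact h2 rfl
  · rw [edgeInt_eq D h]
    refine ⟨hx, ?_⟩
    rintro (rfl | rfl)
    · rcases hD.1 _ h' hx' with h | h
      · exact h1 h
      · exact h2 h
    · rcases hD.1 _ h' hx' with h | h
      · exact h3 h
      · exact h4 h
  · rw [edgeInt_eq D h']
    refine ⟨hx', ?_⟩
    rintro (rfl | rfl)
    · rcases hD.1 _ h hx with h | h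
      · exact h1 h.symm
      · exact h3 h.symm
    · rcases hD.1 _ h hx with h | h
      · exact h2 h.symm
      · exact h4 h.symm

theorem cls_of_nocross (hD : D.IsGood) {H : SimpleGraph V} (hle : H ≤ G)
    (hH : ∀ e ∈ H.edgeSet, ∀ f ∈ H.edgeSet, ¬ D.Cross e f) : Cls H := by
  refine cls_of_plane D.pos (arcSet D) ?_ ?_
  · intro u v h
    rw [arcSet_eq D (hle h)]
    exact arc_joined D (hle h)
  · intro u v a b h h' h1 h2 h3 h4
    rw [arcSet_eq D (hle h), arcSet_eq D (hle h')]
    exact indep_disjoint D hD _ _ h1 h2 h3 h4 (hH _ h _ h')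

open Classical in
theorem cls_of_reroute (hD : D.IsGood) (hP : D.IsOnePlanar) {H : SimpleGraph V} (hle : H ≤ G)
    (p q r s : V) (hpr : G.Adj p r) (hqs : G.Adj q s)
    (hx : D.Cross s(p, r) s(q, s))
    (hH : ∀ e ∈ H.edgeSet, ∀ f ∈ H.edgeSet, e ≠ s(p, q) → f ≠ s(p, q) → ¬ D.Cross e f) :
    Cls H := by
  obtain ⟨hne, x, hx1, hx2⟩ := id hx
  rw [edgeInt_eq D hpr] at hx1
  rw [edgeInt_eq D hqs] at hx2
  obtain ⟨P, hPs, hPj, hPr⟩ := arc_half D hpr hx1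
  obtain ⟨Q, hQs, hQj, hQr⟩ := arc_half D hqs hx2
  have hj : JoinedIn (P ∪ Q) (D.pos p) (D.pos q) :=
    (hPj.mono subset_union_left).trans (hQj.symm.mono subset_union_right)
  -- a half arc is disjoint from edges not touching p and not crossing
  have half : ∀ (p r : V) (hpr : G.Adj p r) (P : Set (ℝ × ℝ)), P ⊆ D.arc hpr → D.pos r ∉ P →
      ∀ (a b : V) (hab : G.Adj a b), a ≠ p → b ≠ p → ¬ D.Cross s(p, r) s(a, b) →
      Disjoint P (D.arc hab) := by
    intro p r hpr P hPs hPr a b hab hap hbp hc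
    rw [Set.disjoint_left]
    intro y hy hy'
    apply hc
    refine ⟨?_, y, ?_, ?_⟩
    · intro he
      rcases Sym2.eq_iff.1 he with ⟨rfl, rfl⟩ | ⟨rfl, rfl⟩
      · exact hap rfl
      · exact hbp rfl
    · rw [edgeInt_eq D hpr]
      refine ⟨hPs hy, ?_⟩
      rintro (rfl | rfl)
      · rcases hD.1 _ hab hy' with h | h
        · exact hap h.symm
        · exact hbp h.symm
      · exact hPr hy
    · rw [edgeInt_eq D hab]
      refine ⟨hy', ?_⟩
      rintro (rfl | rfl)
      · rcases hD.1 _ hpr (hPs hy) with h | h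
        · exact hap h
        · exact hPr (h ▸ hy)
      · rcases hD.1 _ hpr (hPs hy) with h | h
        · exact hbp h
        · exact hPr (h ▸ hy)
  have key : ∀ a b (hab : G.Adj a b), a ≠ p → a ≠ q → b ≠ p → b ≠ q →
      Disjoint (P ∪ Q) (D.arc hab) := by
    intro a b hab h1 h2 h3 h4
    refine Disjoint.union_left ?_ ?_
    · refine half p r hpr P hPs hPr a b hab h1 h3 ?_
      intro hc
      rcases Sym2.eq_iff.1 (hP _ hc hx) with ⟨h, _⟩ | ⟨_, h⟩
      · exact h2 h
      · exact h4 h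
    · refine half q s hqs Q hQs hQr a b hab h2 h4 ?_
      intro hc
      rcases Sym2.eq_iff.1 (hP _ hc (cross_symm D hx)) with ⟨h, _⟩ | ⟨_, h⟩
      · exact h1 h
      · exact h3 h
  have hout : ∀ u v a b : V, s(u, v) = s(p, q) → u ≠ a → u ≠ b → v ≠ a → v ≠ b →
      a ≠ p ∧ a ≠ q ∧ b ≠ p ∧ b ≠ q := by
    intro u v a b he h1 h2 h3 h4
    rcases Sym2.eq_iff.1 he with ⟨rfl, rfl⟩ | ⟨rfl, rfl⟩
    · exact ⟨h1.symm, h3.symm, h2.symm, h4.symm⟩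
    · exact ⟨h3.symm, h1.symm, h4.symm, h2.symm⟩
  refine cls_of_plane D.pos (fun e => if e = s(p, q) then P ∪ Q else arcSet D e) ?_ ?_
  · intro u v h
    split_ifs with he
    · rcases Sym2.eq_iff.1 he with ⟨rfl, rfl⟩ | ⟨rfl, rfl⟩
      · exact hj
      · exact hj.symm
    · rw [arcSet_eq D (hle h)]
      exact arc_joined D (hle h)
  · intro u v a b h h' h1 h2 h3 h4
    split_ifs with he he' he'
    · obtain ⟨g1, g2, g3, g4⟩ := hout u v a b he h1 h2 h3 h4
      rcases Sym2.eq_iff.1 he' with ⟨h, _⟩ | ⟨h, _⟩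
      · exact absurd h g1
      · exact absurd h g2
    · obtain ⟨g1, g2, g3, g4⟩ := hout u v a b he h1 h2 h3 h4
      rw [arcSet_eq D (hle h')]
      exact key a b _ g1 g2 g3 g4
    · obtain ⟨g1, g2, g3, g4⟩ := hout a b u v he' h1.symm h3.symm h2.symm h4.symm
      rw [arcSet_eq D (hle h)]
      exact (key u v _ g1 g2 g3 g4).symm
    · rw [arcSet_eq D (hle h), arcSet_eq D (hle h')]
      exact indep_disjoint D hD _ _ h1 h2 h3 h4 (hH _ h _ h' he he')

theorem fromEdgeSet_edgeSet_of_subset {F : Set (Sym2 V)} (hF : F ⊆ G.edgeSet) :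
    (SimpleGraph.fromEdgeSet F).edgeSet = F := by
  rw [SimpleGraph.edgeSet_fromEdgeSet]
  ext e
  constructor
  · exact fun h => h.1
  · exact fun h => ⟨h, G.not_isDiag_of_mem_edgeSet (hF h)⟩

theorem fromEdgeSet_le_of_subset {F : Set (Sym2 V)} (hF : F ⊆ G.edgeSet) :
    SimpleGraph.fromEdgeSet F ≤ G := by
  intro a b h
  rw [SimpleGraph.fromEdgeSet_adj] at h
  exact hF h.1

open Classical in
theorem crNum_lower [Fintype V] (h3 : 3 ≤ Fintype.card V) (hD : D.IsGood) :
    G.edgeSet.ncard + 6 ≤ 3 * Fintype.card V + D.crNum := by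
  -- maximal crossing-free set of edges
  obtain ⟨F, ⟨hF1, hF2⟩, hmax⟩ := Set.Finite.exists_maximalFor (fun F : Set (Sym2 V) => F)
    {F : Set (Sym2 V) | F ⊆ G.edgeSet ∧ ∀ e ∈ F, ∀ f ∈ F, ¬ D.Cross e f} (Set.toFinite _)
    ⟨∅, by simp⟩
  have hcl : Cls (SimpleGraph.fromEdgeSet F) := by
    refine cls_of_nocross D hD (fromEdgeSet_le_of_subset hF1) ?_
    rwa [fromEdgeSet_edgeSet_of_subset hF1]
  have hb := hcl.ncard_bound h3
  rw [fromEdgeSet_edgeSet_of_subset hF1] at hb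
  have hex : ∀ e : Sym2 V, e ∈ G.edgeSet \ F → ∃ f ∈ F, D.Cross e f := by
    rintro e ⟨he, heF⟩
    by_contra! hcon
    have := hmax (j := insert e F) ⟨?_, ?_⟩ (Set.subset_insert _ _)
    · exact heF (this (Set.mem_insert _ _))
    · exact Set.insert_subset he hF1
    · rintro a (rfl | ha) b (rfl | hb)
      · exact fun h => h.1 rfl
      · exact hcon b hb
      · exact fun h => hcon a ha (cross_symm D h)
      · exact hF2 a ha b hb
  choose! f hfF hfc using hex
  have hsub : (fun e => (e, f e)) '' (G.edgeSet \ F) ∪ (fun e => (f e, e)) '' (G.edgeSet \ F) ⊆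
      {p : Sym2 V × Sym2 V | D.Cross p.1 p.2} := by
    rintro p (⟨e, he, rfl⟩ | ⟨e, he, rfl⟩)
    · exact hfc e he
    · exact cross_symm D (hfc e he)
  have hcard := Set.ncard_le_ncard hsub (Set.toFinite _)
  rw [Set.ncard_union_eq, Set.ncard_image_of_injective, Set.ncard_image_of_injective] at hcard
  · have h1 : (G.edgeSet \ F).ncard + F.ncard = G.edgeSet.ncard :=
      Set.ncard_sdiff_add_ncard_of_subset hF1
    unfold Drawing.crNum
    omega
  · intro a b h; exact (Prod.ext_iff.1 h).2
  · intro a b h; exact (Prod.ext_iff.1 h).1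
  · rw [Set.disjoint_left]
    rintro p ⟨e, he, rfl⟩ ⟨e', he', h⟩
    have : f e' = e := (Prod.ext_iff.1 h).1
    exact he.2 (this ▸ hfF e' he')

theorem maximal_of_skeleton [Fintype V] (h3 : 3 ≤ Fintype.card V) (hD : D.IsGood)
    (hP : D.IsOnePlanar) (F : Set (Sym2 V)) (hF : F ⊆ G.edgeSet)
    (hFc : 3 * Fintype.card V ≤ F.ncard + 6)
    (hFn : ∀ e ∈ F, ∀ f ∈ F, ¬ D.Cross e f)
    (hk : ∀ e ∈ F, (∃ f, D.Cross e f) ∨ ∃ p q r s, e = s(p, q) ∧ G.Adj p r ∧ G.Adj q s ∧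
      D.Cross s(p, r) s(q, s)) : D.IsMaximalOnePlane := by
  refine ⟨hD, hP, ?_⟩
  rintro u v huv hnadj D' hpos harc ⟨hD', hP'⟩
  have hle : G ≤ G ⊔ SimpleGraph.fromEdgeSet {s(u, v)} := le_sup_left
  have hInt : ∀ e ∈ G.edgeSet, D'.edgeInt e = D.edgeInt e := by
    intro e he
    induction e with
    | _ a b =>
      have he : G.Adj a b := he
      rw [edgeInt_eq D he, edgeInt_eq D' (hle he)]
      unfold Drawing.arcInt
      rw [harc he, hpos]
  have hcr : ∀ e ∈ G.edgeSet, ∀ f ∈ G.edgeSet, (D'.Cross e f ↔ D.Cross e f) := by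
    intro e he f hf
    unfold Drawing.Cross
    rw [hInt e he, hInt f hf]
  have hgF : s(u, v) ∉ F := fun h => hnadj (hF h)
  have hF' : insert s(u, v) F ⊆ (G ⊔ SimpleGraph.fromEdgeSet {s(u, v)}).edgeSet := by
    apply Set.insert_subset
    · simp [huv]
    · exact hF.trans (SimpleGraph.edgeSet_mono hle)
  have hcl : Cls (SimpleGraph.fromEdgeSet (insert s(u, v) F)) := by
    by_cases hx : ∃ e ∈ F, D'.Cross s(u, v) e
    · obtain ⟨e, heF, hx⟩ := hx
      rcases hk e heF with ⟨f, hf⟩ | ⟨p, q, r, s, rfl, hpr, hqs, hc⟩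
      · have hm := cross_mem D hf
        have h1 := (hcr _ hm.1 _ hm.2).2 hf
        have := hP' e h1 (cross_symm D' hx)
        exact (hnadj (show s(u, v) ∈ G.edgeSet from this ▸ hm.2)).elim
      · refine cls_of_reroute D' hD' hP' (fromEdgeSet_le_of_subset hF') p q r s (hle hpr) (hle hqs)
          ((hcr _ hpr _ hqs).2 hc) ?_
        rw [fromEdgeSet_edgeSet_of_subset hF']
        rintro a (rfl | ha) b (rfl | hb) ha' hb' hab
        · exact hab.1 rfl
        · exact hb' (hP' _ hab hx)
        · exact ha' (hP' _ (cross_symm D' hab) hx)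
        · exact hFn a ha b hb ((hcr _ (hF ha) _ (hF hb)).1 hab)
    · push Not at hx
      refine cls_of_nocross D' hD' (fromEdgeSet_le_of_subset hF') ?_
      rw [fromEdgeSet_edgeSet_of_subset hF']
      rintro a (rfl | ha) b (rfl | hb) hab
      · exact hab.1 rfl
      · exact hx b hb hab
      · exact hx a ha (cross_symm D' hab)
      · exact hFn a ha b hb ((hcr _ (hF ha) _ (hF hb)).1 hab)
  have hb := hcl.ncard_bound h3
  rw [fromEdgeSet_edgeSet_of_subset hF', Set.ncard_insert_of_notMem hgF (Set.toFinite _)] at hb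
  omega

end

end VK
namespace VK

/-- Vertex labels: two poles, and five vertices in each of the `r` sectors. -/
abbrev W (r : ℕ) := Bool ⊕ ((Bool ⊕ Bool ⊕ Unit) × Fin r)

abbrev wP {r : ℕ} (f : Bool) : W r := Sum.inl f
abbrev wA {r : ℕ} (f : Bool) (i : Fin r) : W r := Sum.inr (Sum.inl f, i)
abbrev wB {r : ℕ} (f : Bool) (i : Fin r) : W r := Sum.inr (Sum.inr (Sum.inl f), i)
abbrev wX {r : ℕ} (i : Fin r) : W r := Sum.inr (Sum.inr (Sum.inr ()), i)

theorem pigeon {U ι : Type} (S : Set U) (hS : S.Finite) (idx : U → ι) (J : Finset ι)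
    (B : ι → Set U) (hB : ∀ j ∈ J, ∀ w ∈ B j, idx w = j) (hc : S.ncard < J.card) :
    ∃ j ∈ J, ∀ w ∈ B j, w ∉ S := by
  by_contra! hcon
  have hsub : (J : Set ι) ⊆ idx '' S := by
    intro j hj
    obtain ⟨w, hw, hwS⟩ := hcon j hj
    exact ⟨w, hwS, hB j hj w hw⟩
  have h1 := Set.ncard_le_ncard hsub (hS.image _)
  have h2 := Set.ncard_image_le (f := idx) hS
  rw [Set.ncard_coe_finset] at h1
  omega

/-- Reachability avoiding `S`. -/
def Rch {U : Type} (G : SimpleGraph U) (S : Set U) (u v : U) : Prop :=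
  ∃ (hu : u ∉ S) (hv : v ∉ S), (G.induce Sᶜ).Reachable ⟨u, hu⟩ ⟨v, hv⟩

theorem Rch.symm {U : Type} {G : SimpleGraph U} {S : Set U} {u v : U} (h : Rch G S u v) :
    Rch G S v u := by
  obtain ⟨hu, hv, h⟩ := h
  exact ⟨hv, hu, h.symm⟩

theorem Rch.trans {U : Type} {G : SimpleGraph U} {S : Set U} {u v w : U} (h : Rch G S u v)
    (h' : Rch G S v w) : Rch G S u w := by
  obtain ⟨hu, hv, h⟩ := h
  obtain ⟨hv', hw, h'⟩ := h'
  exact ⟨hu, hw, h.trans h'⟩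

theorem Rch.refl {U : Type} {G : SimpleGraph U} {S : Set U} {u : U} (hu : u ∉ S) : Rch G S u u :=
  ⟨hu, hu, SimpleGraph.Reachable.refl _⟩

theorem Rch.step {U : Type} {G : SimpleGraph U} {S : Set U} {u v : U} (hu : u ∉ S) (hv : v ∉ S)
    (h : G.Adj u v) : Rch G S u v :=
  ⟨hu, hv, SimpleGraph.Adj.reachable (by simpa using h)⟩

theorem connected_of_rch {U : Type} {G : SimpleGraph U} {S : Set U} (w : U) (hw : w ∉ S)
    (h : ∀ v, v ∉ S → Rch G S v w) : (G.induce Sᶜ).Connected := by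
  have : Nonempty (Sᶜ : Set U) := ⟨⟨w, hw⟩⟩
  refine ⟨?_⟩
  rintro ⟨u, hu⟩ ⟨v, hv⟩
  obtain ⟨_, _, h1⟩ := (h u hu).trans (h v hv).symm
  exact h1

/-- The adjacencies of the family. -/
structure Fam {r : ℕ} [NeZero r] (G : SimpleGraph (W r)) : Prop where
  hAB : ∀ f f' i, G.Adj (wA f i) (wB f' i)
  hAA : ∀ f i, G.Adj (wA f i) (wA (!f) i)
  hBB : ∀ f i, G.Adj (wB f i) (wB (!f) i)
  hPA : ∀ f i, G.Adj (wP f) (wA f i)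
  hPB : ∀ f i, G.Adj (wP f) (wB f i)
  hPX : ∀ f i, G.Adj (wP f) (wX i)
  hXB : ∀ f i, G.Adj (wX i) (wB f i)
  hXA : ∀ f i, G.Adj (wX i) (wA f (i + 1))
  hBA : ∀ f i, G.Adj (wB f i) (wA f (i + 1))

section
variable {r : ℕ} [NeZero r] {G : SimpleGraph (W r)}

theorem conn_two (hF : Fam G) (hr : 2 ≤ r) (S : Set (W r)) (hS : S.ncard ≤ 5) (hN : ∀ f, wP f ∉ S) :
    (G.induce Sᶜ).Connected := by
  have hP : Rch G S (wP true) (wP false) := by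
    obtain ⟨j, -, hj⟩ := pigeon S (Set.toFinite _)
      (fun w : W r => match w with
        | Sum.inl _ => ((0 : Fin 3), (0 : Fin r))
        | Sum.inr (Sum.inl _, i) => (0, i)
        | Sum.inr (Sum.inr (Sum.inl _), i) => (1, i)
        | Sum.inr (Sum.inr (Sum.inr _), i) => (2, i))
      Finset.univ
      (fun j => match j with
        | (0, i) => {w | ∃ f, w = wA f i}
        | (1, i) => {w | ∃ f, w = wB f i}
        | (2, i) => {w | w = wX i})
      (by
        rintro ⟨j, i⟩ - w hw
        fin_cases j
        · obtain ⟨f, rfl⟩ := hw; rfl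
        · obtain ⟨f, rfl⟩ := hw; rfl
        · obtain rfl := hw; rfl)
      (by simp; omega)
    obtain ⟨j, i⟩ := j
    fin_cases j
    · have h1 := hj (wA true i) ⟨_, rfl⟩
      have h2 := hj (wA false i) ⟨_, rfl⟩
      exact ((Rch.step (hN _) h1 (hF.hPA _ _)).trans (Rch.step h1 h2 (hF.hAA _ _))).trans
        (Rch.step (hN _) h2 (hF.hPA _ _)).symm
    · have h1 := hj (wB true i) ⟨_, rfl⟩
      have h2 := hj (wB false i) ⟨_, rfl⟩
      exact ((Rch.step (hN _) h1 (hF.hPB _ _)).trans (Rch.step h1 h2 (hF.hBB _ _))).trans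
        (Rch.step (hN _) h2 (hF.hPB _ _)).symm
    · have h1 := hj (wX i) rfl
      exact (Rch.step (hN _) h1 (hF.hPX _ _)).trans (Rch.step (hN _) h1 (hF.hPX _ _)).symm
  have hPf : ∀ f, Rch G S (wP f) (wP true) := by
    intro f
    cases f
    · exact hP.symm
    · exact Rch.refl (hN _)
  refine connected_of_rch (wP true) (hN _) ?_
  rintro (f | ⟨f | f | ⟨⟩, i⟩) hv
  · exact hPf f
  · exact (Rch.step (hN _) hv (hF.hPA f i)).symm.trans (hPf f)
  · exact (Rch.step (hN _) hv (hF.hPB f i)).symm.trans (hPf f)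
  · exact (Rch.step (hN _) hv (hF.hPX true i)).symm

open Fin.NatCast Fin.CommRing in
theorem conn_one (hF : Fam G) (hr : 2 ≤ r) (S : Set (W r)) (hS : S.ncard ≤ 5) (g : Bool) (hg : wP g ∉ S)
    (hg' : wP (!g) ∈ S) : (G.induce Sᶜ).Connected := by
  have hS' : (S \ {wP (!g)}).ncard < 5 := by
    have := Set.ncard_sdiff_singleton_add_one hg' (Set.toFinite _)
    omega
  have hne : ∀ i : Fin r, i - 1 ≠ i := by
    intro i h
    have h1 : (1 : Fin r) = 0 := sub_eq_self.1 h
    have : ((1 : ℕ) : Fin r) = 0 := by simpa using h1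
    rw [Fin.natCast_eq_zero] at this
    have := Nat.le_of_dvd one_pos this
    omega
  have gA : ∀ i, wA g i ∉ S → Rch G S (wA g i) (wP g) := fun i h =>
    (Rch.step hg h (hF.hPA _ _)).symm
  have gB : ∀ i, wB g i ∉ S → Rch G S (wB g i) (wP g) := fun i h =>
    (Rch.step hg h (hF.hPB _ _)).symm
  have gX : ∀ i, wX i ∉ S → Rch G S (wX i) (wP g) := fun i h =>
    (Rch.step hg h (hF.hPX _ _)).symm
  have hng : (!g) ≠ g := by cases g <;> simp
  have hXA' : ∀ f i, G.Adj (wX (i - 1)) (wA f i) := by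
    intro f i
    simpa using hF.hXA f (i - 1)
  have hBA' : ∀ f i, G.Adj (wB f (i - 1)) (wA f i) := by
    intro f i
    simpa using hF.hBA f (i - 1)
  have hAA' : ∀ i, G.Adj (wA (!g) i) (wA g i) := fun i => (hF.hAA g i).symm
  have hBB' : ∀ i, G.Adj (wB (!g) i) (wB g i) := fun i => (hF.hBB g i).symm
  refine connected_of_rch (wP g) hg ?_
  rintro (f | ⟨f | f | ⟨⟩, i⟩) hv
  · by_cases hfg : f = g
    · subst hfg; exact Rch.refl hg
    · have : f = !g := by revert hfg; cases f <;> cases g <;> simp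
      subst this; exact absurd hg' hv
  · by_cases hfg : f = g
    · subst hfg; exact gA i hv
    · have : f = !g := by revert hfg; cases f <;> cases g <;> simp
      subst this
      obtain ⟨j, -, hj⟩ := pigeon (S \ {wP (!g)}) (Set.toFinite _)
        (fun w : W r => if w = wA g i then (0 : Fin 5) else if w = wB g i then 1 else
          if w = wX (i - 1) then 2 else if w = wB (!g) i ∨ w = wX i then 3 else 4)
        Finset.univ
        ![{wA g i}, {wB g i}, {wX (i - 1)}, {wB (!g) i, wX i}, {wB (!g) (i - 1), wB g (i - 1)}]
        (by
          intro j _ w hw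
          fin_cases j <;> simp at hw
          · subst hw; simp
          · subst hw; simp
          · subst hw; simp
          · rcases hw with rfl | rfl <;> simp [hng, (hne i).symm]
          · rcases hw with rfl | rfl <;> simp [hng, hne i]) (by simpa using hS')
      have hj' : ∀ w, w ≠ wP (!g) → w ∈ (![{wA g i}, {wB g i}, {wX (i - 1)}, {wB (!g) i, wX i},
          {wB (!g) (i - 1), wB g (i - 1)}] : Fin 5 → Set (W r)) j → w ∉ S :=
        fun w h1 h2 h3 => hj w h2 ⟨h3, h1⟩
      fin_cases j
      · have h1 := hj' (wA g i) (by simp) (by simp)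
        exact (Rch.step hv h1 (hAA' i)).trans (gA _ h1)
      · have h1 := hj' (wB g i) (by simp) (by simp)
        exact (Rch.step hv h1 (hF.hAB _ _ i)).trans (gB _ h1)
      · have h1 := hj' (wX (i - 1)) (by simp) (by simp)
        exact (Rch.step hv h1 (hXA' _ i).symm).trans (gX _ h1)
      · have h1 := hj' (wX i) (by simp) (by simp)
        have h2 := hj' (wB (!g) i) (by simp) (by simp)
        exact ((Rch.step hv h2 (hF.hAB _ _ i)).trans
          (Rch.step h2 h1 (hF.hXB _ _).symm)).trans (gX _ h1)
      · have h1 := hj' (wB (!g) (i - 1)) (by simp) (by simp)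
        have h2 := hj' (wB g (i - 1)) (by simp) (by simp)
        exact ((Rch.step hv h1 (hBA' _ i).symm).trans
          (Rch.step h1 h2 (hBB' _))).trans (gB _ h2)
  · by_cases hfg : f = g
    · subst hfg; exact gB i hv
    · have : f = !g := by revert hfg; cases f <;> cases g <;> simp
      subst this
      have hne' : i + 1 ≠ i := by
        intro h
        apply hne (i + 1)
        rw [add_sub_cancel_right, h]
      obtain ⟨j, -, hj⟩ := pigeon (S \ {wP (!g)}) (Set.toFinite _)
        (fun w : W r => if w = wA g i then (0 : Fin 5) else if w = wB g i then 1 else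
          if w = wX i then 2 else if w = wA (!g) i ∨ w = wX (i - 1) then 3 else 4)
        Finset.univ
        ![{wA g i}, {wB g i}, {wX i}, {wA (!g) i, wX (i - 1)}, {wA (!g) (i + 1), wA g (i + 1)}]
        (by
          intro j _ w hw
          fin_cases j <;> simp at hw
          · subst hw; simp
          · subst hw; simp
          · subst hw; simp
          · rcases hw with rfl | rfl <;> simp [hng, hne i]
          · rcases hw with rfl | rfl <;> simp [hng, hne']) (by simpa using hS')
      have hj' : ∀ w, w ≠ wP (!g) → w ∈ (![{wA g i}, {wB g i}, {wX i}, {wA (!g) i, wX (i - 1)},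
          {wA (!g) (i + 1), wA g (i + 1)}] : Fin 5 → Set (W r)) j → w ∉ S :=
        fun w h1 h2 h3 => hj w h2 ⟨h3, h1⟩
      fin_cases j
      · have h1 := hj' (wA g i) (by simp) (by simp)
        exact (Rch.step hv h1 (hF.hAB _ _ i).symm).trans (gA _ h1)
      · have h1 := hj' (wB g i) (by simp) (by simp)
        exact (Rch.step hv h1 (hBB' i)).trans (gB _ h1)
      · have h1 := hj' (wX i) (by simp) (by simp)
        exact (Rch.step hv h1 (hF.hXB _ i).symm).trans (gX _ h1)
      · have h1 := hj' (wX (i - 1)) (by simp) (by simp)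
        have h2 := hj' (wA (!g) i) (by simp) (by simp)
        exact ((Rch.step hv h2 (hF.hAB _ _ i).symm).trans
          (Rch.step h2 h1 (hXA' _ _).symm)).trans (gX _ h1)
      · have h1 := hj' (wA (!g) (i + 1)) (by simp) (by simp)
        have h2 := hj' (wA g (i + 1)) (by simp) (by simp)
        exact ((Rch.step hv h1 (hF.hBA _ i)).trans
          (Rch.step h1 h2 (hAA' _))).trans (gA _ h2)
  · exact gX i hv

open Fin.NatCast Fin.CommRing in
theorem conn_zero (hF : Fam G) (S : Set (W r)) (hS : S.ncard ≤ 5) (hg : ∀ f, wP f ∈ S) :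
    (G.induce Sᶜ).Connected := by
  have hS' : (S \ {wP true, wP false}).ncard < 4 := by
    have h := Set.ncard_sdiff_add_ncard_of_subset (s := {wP true, wP false}) (t := S)
      (by rintro w (rfl | rfl) <;> exact hg _)
    rw [Set.ncard_pair (by simp)] at h
    omega
  -- the cliques
  have hK : ∀ i, ∃ w, w ∉ S ∧ ∃ f, w = wA f i ∨ w = wB f i := by
    intro i
    obtain ⟨⟨k, f⟩, -, hj⟩ := pigeon (S \ {wP true, wP false}) (Set.toFinite _)
      (fun w : W r => match w with
        | Sum.inl _ => (true, true)
        | Sum.inr (Sum.inl f, i) => (true, f)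
        | Sum.inr (Sum.inr (Sum.inl f), i) => (false, f)
        | Sum.inr (Sum.inr (Sum.inr _), i) => (true, true))
      Finset.univ
      (fun j => {if j.1 then wA j.2 i else wB j.2 i})
      (by
        rintro ⟨k, f⟩ - w hw
        cases k
        · obtain rfl := hw; rfl
        · obtain rfl := hw; rfl)
      (by simpa using hS')
    refine ⟨_, fun h => hj _ rfl ⟨h, ?_⟩, f, ?_⟩ <;> cases k <;> simp
  have hKK : ∀ i u v, u ∉ S → v ∉ S → (∃ f, u = wA f i ∨ u = wB f i) →
      (∃ f, v = wA f i ∨ v = wB f i) → Rch G S u v := by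
    rintro i u v hu hv ⟨f, hf⟩ ⟨f', hf'⟩
    by_cases huv : u = v
    · subst huv; exact Rch.refl hu
    · refine Rch.step hu hv ?_
      rcases hf with rfl | rfl <;> rcases hf' with rfl | rfl
      · have : f' = !f := by revert huv; cases f <;> cases f' <;> simp
        subst this; exact hF.hAA _ _
      · exact hF.hAB _ _ _
      · exact (hF.hAB _ _ _).symm
      · have : f' = !f := by revert huv; cases f <;> cases f' <;> simp
        subst this; exact hF.hBB _ _
  choose κ hκS hκ using hK
  -- broken links
  let Br : Fin r → Prop := fun i => ∀ f, wB f i ∈ S ∨ wA f (i + 1) ∈ S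
  have hBr : ∀ i j, Br i → Br j → i = j := by
    intro i j hi hj
    by_contra hij
    obtain ⟨⟨k, f⟩, -, hj⟩ := pigeon (S \ {wP true, wP false}) (Set.toFinite _)
      (fun w : W r => match w with
        | Sum.inl _ => (true, true)
        | Sum.inr (Sum.inl f, k) => (decide (k = i + 1), f)
        | Sum.inr (Sum.inr (Sum.inl f), k) => (decide (k = i), f)
        | Sum.inr (Sum.inr (Sum.inr _), i) => (true, true))
      Finset.univ
      (fun p => {wB p.2 (if p.1 then i else j), wA p.2 ((if p.1 then i else j) + 1)})
      (by
        rintro ⟨k, f⟩ - w hw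
        have hij' : j ≠ i := fun h => hij h.symm
        cases k <;> rcases hw with rfl | rfl <;> simp [hij'])
      (by simpa using hS')
    have : Br (if k then i else j) := by cases k <;> assumption
    rcases this f with h | h
    · exact hj _ (Or.inl rfl) ⟨h, by simp⟩
    · exact hj _ (Or.inr rfl) ⟨h, by simp⟩
  obtain ⟨i₀, hi₀⟩ : ∃ i₀, ∀ i, i ≠ i₀ → ¬ Br i := by
    by_cases h : ∃ i, Br i
    · obtain ⟨i, hi⟩ := h
      exact ⟨i, fun j hj hb => hj (hBr _ _ hb hi)⟩
    · push Not at h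
      exact ⟨0, fun i _ => h i⟩
  have hstep : ∀ i, i ≠ i₀ → Rch G S (κ i) (κ (i + 1)) := by
    intro i hi
    have := hi₀ i hi
    simp only [Br, not_forall, not_or] at this
    obtain ⟨f, h1, h2⟩ := this
    exact ((hKK i _ _ (hκS i) h1 (hκ i) ⟨f, Or.inr rfl⟩).trans (Rch.step h1 h2 (hF.hBA _ _))).trans
      (hKK (i + 1) _ _ h2 (hκS _) ⟨f, Or.inl rfl⟩ (hκ _))
  have hchain : ∀ k : ℕ, k < r → Rch G S (κ (i₀ + 1)) (κ (i₀ + 1 + (k : Fin r))) := by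
    intro k
    induction k with
    | zero => intro _; simpa using Rch.refl (hκS _)
    | succ k ih =>
      intro hk
      refine (ih (by omega)).trans ?_
      have := hstep (i₀ + 1 + (k : Fin r)) (by
        intro h
        rw [add_assoc, add_eq_left] at h
        have h' : ((1 + k : ℕ) : Fin r) = 0 := by push_cast; exact h
        rw [Fin.natCast_eq_zero] at h'
        have := Nat.le_of_dvd (by omega) h'
        omega)
      simpa [add_assoc] using this
  have hall : ∀ i, Rch G S (κ i) (κ (i₀ + 1)) := by
    intro i
    have := hchain (i - (i₀ + 1)).val (i - (i₀ + 1)).isLt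
    rw [Fin.cast_val_eq_self, add_sub_cancel] at this
    exact this.symm
  refine connected_of_rch (κ (i₀ + 1)) (hκS _) ?_
  rintro (f | ⟨f | f | ⟨⟩, i⟩) hv
  · exact absurd (hg f) hv
  · exact (hKK i _ _ hv (hκS i) ⟨f, Or.inl rfl⟩ (hκ i)).trans (hall i)
  · exact (hKK i _ _ hv (hκS i) ⟨f, Or.inr rfl⟩ (hκ i)).trans (hall i)
  · obtain ⟨⟨k, f⟩, -, hj⟩ := pigeon (S \ {wP true, wP false}) (Set.toFinite _)
      (fun w : W r => match w with
        | Sum.inl _ => (true, true)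
        | Sum.inr (Sum.inl f, i) => (true, f)
        | Sum.inr (Sum.inr (Sum.inl f), i) => (false, f)
        | Sum.inr (Sum.inr (Sum.inr _), i) => (true, true))
      Finset.univ
      (fun j => {if j.1 then wA j.2 (i + 1) else wB j.2 i})
      (by
        rintro ⟨k, f⟩ - w hw
        cases k
        · obtain rfl := hw; rfl
        · obtain rfl := hw; rfl)
      (by simpa using hS')
    cases k
    · have h1 : wB f i ∉ S := fun h => hj (wB f i) rfl ⟨h, by simp⟩
      exact ((Rch.step hv h1 (hF.hXB _ _)).trans
        (hKK i _ _ h1 (hκS i) ⟨f, Or.inr rfl⟩ (hκ i))).trans (hall i)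
    · have h1 : wA f (i + 1) ∉ S := fun h => hj (wA f (i + 1)) rfl ⟨h, by simp⟩
      exact ((Rch.step hv h1 (hF.hXA _ _)).trans
        (hKK (i + 1) _ _ h1 (hκS _) ⟨f, Or.inl rfl⟩ (hκ _))).trans (hall _)

theorem Fam.kconn (hF : Fam G) (hr : 2 ≤ r) : KConnected G 6 := by
  intro S hS
  have hS' : S.ncard ≤ 5 := by omega
  by_cases ht : wP true ∈ S <;> by_cases hf : wP false ∈ S
  · exact conn_zero hF S hS' (by intro f; cases f <;> assumption)
  · exact conn_one hF hr S hS' false hf ht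
  · exact conn_one hF hr S hS' true ht hf
  · exact conn_two hF hr S hS' (by intro f; cases f <;> assumption)

end

end VK
namespace VK

/-- orientation determinant -/
def cr (p q r : ℝ × ℝ) : ℝ := (q.1 - p.1) * (r.2 - p.2) - (q.2 - p.2) * (r.1 - p.1)

theorem mem_seg {p q x : ℝ × ℝ} (h : x ∈ segment ℝ p q) :
    ∃ t : ℝ, 0 ≤ t ∧ t ≤ 1 ∧ x.1 = p.1 + t * (q.1 - p.1) ∧ x.2 = p.2 + t * (q.2 - p.2) := by
  rw [segment_eq_image_lineMap] at h
  obtain ⟨t, ⟨h0, h1⟩, rfl⟩ := h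
  refine ⟨t, h0, h1, ?_, ?_⟩ <;> simp [AffineMap.lineMap_apply] <;> ring

theorem seg_mem {p q x : ℝ × ℝ} (t : ℝ) (h0 : 0 ≤ t) (h1 : t ≤ 1)
    (hx : x.1 = p.1 + t * (q.1 - p.1)) (hy : x.2 = p.2 + t * (q.2 - p.2)) :
    x ∈ segment ℝ p q := by
  rw [segment_eq_image_lineMap]
  refine ⟨t, ⟨h0, h1⟩, ?_⟩
  ext
  · simp [AffineMap.lineMap_apply]; rw [hx]; ring
  · simp [AffineMap.lineMap_apply]; rw [hy]; ring

theorem cr_seg {p q x : ℝ × ℝ} (h : x ∈ segment ℝ p q) : cr p q x = 0 := by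
  obtain ⟨t, _, _, h1, h2⟩ := mem_seg h
  unfold cr; rw [h1, h2]; ring

theorem cr_swap (p q r : ℝ × ℝ) : cr p r q = - cr p q r := by unfold cr; ring
theorem cr_rot (p q r : ℝ × ℝ) : cr q r p = cr p q r := by unfold cr; ring
theorem cr_l (p q : ℝ × ℝ) : cr p q p = 0 := by unfold cr; ring
theorem cr_r (p q : ℝ × ℝ) : cr p q q = 0 := by unfold cr; ring

theorem sameside {a b c d x : ℝ × ℝ} (h : 0 < cr a b c * cr a b d)
    (h1 : x ∈ segment ℝ a b) (h2 : x ∈ segment ℝ c d) : False := by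
  have h0 := cr_seg h1
  obtain ⟨t, ht0, ht1, e1, e2⟩ := mem_seg h2
  have key : cr a b x = (1 - t) * cr a b c + t * cr a b d := by
    unfold cr; rw [e1, e2]; ring
  rw [h0] at key
  rcases pos_and_pos_or_neg_and_neg_of_mul_pos h with ⟨hc, hd⟩ | ⟨hc, hd⟩
  · rcases eq_or_lt_of_le ht0 with rfl | ht
    · linarith
    · nlinarith [mul_pos ht hd, mul_nonneg (sub_nonneg.2 ht1) hc.le]
  · rcases eq_or_lt_of_le ht0 with rfl | ht
    · linarith
    · nlinarith [mul_pos ht (neg_pos.2 hd), mul_nonneg (sub_nonneg.2 ht1) (neg_pos.2 hc).le]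

theorem share_pt {u v w x : ℝ × ℝ} (h : cr u v w ≠ 0) (h1 : x ∈ segment ℝ u v)
    (h2 : x ∈ segment ℝ u w) : x = u := by
  have h0 := cr_seg h1
  obtain ⟨t, ht0, ht1, e1, e2⟩ := mem_seg h2
  have key : cr u v x = t * cr u v w := by
    unfold cr; rw [e1, e2]; ring
  rw [h0] at key
  have : t = 0 := by
    rcases mul_eq_zero.1 key.symm with h' | h'
    · exact h'
    · exact absurd h' h
  subst this
  ext
  · rw [e1]; ring
  · rw [e2]; ring

theorem straddle_unique {a b c d x y : ℝ × ℝ} (h : cr a b c * cr a b d < 0)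
    (h1 : x ∈ segment ℝ a b) (h2 : x ∈ segment ℝ c d)
    (h3 : y ∈ segment ℝ a b) (h4 : y ∈ segment ℝ c d) : x = y := by
  have hx := cr_seg h1
  have hy := cr_seg h3
  obtain ⟨t, ht0, ht1, e1, e2⟩ := mem_seg h2
  obtain ⟨s, hs0, hs1, e3, e4⟩ := mem_seg h4
  have k1 : cr a b x = cr a b c + t * (cr a b d - cr a b c) := by
    unfold cr; rw [e1, e2]; ring
  have k2 : cr a b y = cr a b c + s * (cr a b d - cr a b c) := by
    unfold cr; rw [e3, e4]; ring
  have hne : cr a b d - cr a b c ≠ 0 := by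
    intro h0
    have : cr a b d = cr a b c := by linarith
    rw [this] at h
    nlinarith [mul_self_nonneg (cr a b c)]
  have : t = s := by
    have : (t - s) * (cr a b d - cr a b c) = 0 := by
      rw [hx] at k1; rw [hy] at k2; linarith
    rcases mul_eq_zero.1 this with h' | h'
    · linarith
    · exact absurd h' hne
  subst this
  ext
  · rw [e1, e3]
  · rw [e2, e4]

theorem ratio_mem {x y : ℝ} (h : x * y < 0) : 0 < x / (x - y) ∧ x / (x - y) < 1 := by
  rcases mul_neg_iff.1 h with ⟨hx, hy⟩ | ⟨hx, hy⟩
  · have : 0 < x - y := by linarith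
    exact ⟨div_pos hx this, by rw [div_lt_one this]; linarith⟩
  · have : x - y < 0 := by linarith
    exact ⟨div_pos_of_neg_of_neg hx this, by rw [div_lt_one_of_neg this]; linarith⟩

theorem straddle_exists {a b c d : ℝ × ℝ} (h : cr a b c * cr a b d < 0)
    (h' : cr c d a * cr c d b < 0) :
    ∃ x, x ∈ segment ℝ a b ∧ x ∈ segment ℝ c d := by
  obtain ⟨g1, g2⟩ := ratio_mem h
  obtain ⟨g3, g4⟩ := ratio_mem h'
  set t := cr a b c / (cr a b c - cr a b d) with ht
  set s := cr c d a / (cr c d a - cr c d b) with hs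
  have hD : cr c d a - cr c d b ≠ 0 := by
    intro h0
    have : cr c d b = cr c d a := by linarith
    rw [this] at h'
    nlinarith [mul_self_nonneg (cr c d a)]
  have hD2 : cr a b c - cr a b d = - (cr c d a - cr c d b) := by unfold cr; ring
  have hD3 : cr a b c - cr a b d ≠ 0 := by rw [hD2]; exact neg_ne_zero.2 hD
  have et : t * (cr a b c - cr a b d) = cr a b c := div_mul_cancel₀ _ hD3
  have es : s * (cr c d a - cr c d b) = cr c d a := div_mul_cancel₀ _ hD
  refine ⟨(a.1 + s * (b.1 - a.1), a.2 + s * (b.2 - a.2)),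
    seg_mem s g3.le g4.le rfl rfl, seg_mem t g1.le g2.le ?_ ?_⟩
  · apply mul_right_cancel₀ hD
    have e1 : (a.1 + s * (b.1 - a.1)) * (cr c d a - cr c d b) =
      a.1 * (cr c d a - cr c d b) + (s * (cr c d a - cr c d b)) * (b.1 - a.1) := by ring
    have e2 : (c.1 + t * (d.1 - c.1)) * (cr c d a - cr c d b) =
      c.1 * (cr c d a - cr c d b) - (t * (cr a b c - cr a b d)) * (d.1 - c.1) := by
      rw [hD2]; ring
    show (a.1 + s * (b.1 - a.1)) * _ = _
    rw [e1, e2, et, es]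
    unfold cr; ring
  · apply mul_right_cancel₀ hD
    have e1 : (a.2 + s * (b.2 - a.2)) * (cr c d a - cr c d b) =
      a.2 * (cr c d a - cr c d b) + (s * (cr c d a - cr c d b)) * (b.2 - a.2) := by ring
    have e2 : (c.2 + t * (d.2 - c.2)) * (cr c d a - cr c d b) =
      c.2 * (cr c d a - cr c d b) - (t * (cr a b c - cr a b d)) * (d.2 - c.2) := by
      rw [hD2]; ring
    show (a.2 + s * (b.2 - a.2)) * _ = _
    rw [e1, e2, et, es]
    unfold cr; ring

section straight

variable {V I : Type}

/-- graph with prescribed edges -/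
abbrev sG (src tgt : I → V) : SimpleGraph V :=
  SimpleGraph.fromEdgeSet (Set.range fun ε => s(src ε, tgt ε))

/-- straight-line drawing -/
def sD (pos : V → ℝ × ℝ) (hpos : Function.Injective pos) (src tgt : I → V) :
    Drawing (sG src tgt) where
  pos := pos
  pos_inj := hpos
  arc u v _ := segment ℝ (pos u) (pos v)
  arc_symm u v _ := segment_symm ℝ _ _
  arc_isArc u v h := by
    refine ⟨fun t => AffineMap.lineMap (pos u) (pos v) t, ?_, ?_, by simp, by simp, ?_⟩
    · exact AffineMap.lineMap_continuous.continuousOn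
    · exact (AffineMap.lineMap_injective ℝ (fun h' => h.ne (hpos h'))).injOn
    · rw [segment_eq_image_lineMap]

/-- Data certifying the crossings of a straight-line drawing. -/
structure Cert (pos : V → ℝ × ℝ) (src tgt : I → V) (X : I → I → Prop) : Prop where
  hpos : Function.Injective pos
  hne : ∀ ε, src ε ≠ tgt ε
  hinc : ∀ w, ∃ ε, w = src ε ∨ w = tgt ε
  hX : ∀ ε δ, X ε δ →
    cr (pos (src ε)) (pos (tgt ε)) (pos (src δ)) * cr (pos (src ε)) (pos (tgt ε)) (pos (tgt δ)) < 0 ∧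
    cr (pos (src δ)) (pos (tgt δ)) (pos (src ε)) * cr (pos (src δ)) (pos (tgt δ)) (pos (tgt ε)) < 0
  hA : ∀ ε δ, ε ≠ δ → ¬ X ε δ →
    (∃ u v w, s(src ε, tgt ε) = s(u, v) ∧ s(src δ, tgt δ) = s(u, w) ∧
      cr (pos u) (pos v) (pos w) ≠ 0) ∨
    0 < cr (pos (src ε)) (pos (tgt ε)) (pos (src δ)) * cr (pos (src ε)) (pos (tgt ε)) (pos (tgt δ)) ∨
    0 < cr (pos (src δ)) (pos (tgt δ)) (pos (src ε)) * cr (pos (src δ)) (pos (tgt δ)) (pos (tgt ε))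
  hX1 : ∀ ε δ δ', X ε δ → X ε δ' → δ = δ'

variable {pos : V → ℝ × ℝ} {src tgt : I → V} {X : I → I → Prop}

theorem Cert.adj (C : Cert pos src tgt X) (ε : I) : (sG src tgt).Adj (src ε) (tgt ε) := by
  rw [SimpleGraph.fromEdgeSet_adj]
  exact ⟨⟨ε, rfl⟩, C.hne ε⟩

theorem Cert.edgeSet_eq (C : Cert pos src tgt X) : (sG src tgt).edgeSet = Set.range fun ε => s(src ε, tgt ε) := by
  rw [SimpleGraph.edgeSet_fromEdgeSet]
  ext e
  constructor
  · exact fun h => h.1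
  · rintro ⟨ε, rfl⟩
    exact ⟨⟨ε, rfl⟩, by simpa using C.hne ε⟩

theorem Cert.edge_inj (C : Cert pos src tgt X) : Function.Injective fun ε => s(src ε, tgt ε) := by
  intro ε δ h
  by_contra hne
  have h : s(src ε, tgt ε) = s(src δ, tgt δ) := h
  by_cases hX : X ε δ
  · obtain ⟨h1, -⟩ := C.hX ε δ hX
    rcases Sym2.eq_iff.1 h with ⟨e1, e2⟩ | ⟨e1, e2⟩
    · rw [← e1, cr_l] at h1; simp at h1
    · rw [← e1, cr_l] at h1; simp at h1
  · rcases C.hA ε δ hne hX with ⟨u, v, w, e1, e2, hc⟩ | hc | hc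
    · rw [e1, e2] at h
      have : v = w := by
        exact Sym2.congr_right.1 h
      subst this
      exact hc (cr_r _ _)
    · rcases Sym2.eq_iff.1 h with ⟨e1, e2⟩ | ⟨e1, e2⟩
      · rw [← e1, cr_l] at hc; simp at hc
      · rw [← e1, cr_l] at hc; simp at hc
    · rcases Sym2.eq_iff.1 h with ⟨e1, e2⟩ | ⟨e1, e2⟩
      · rw [e1, cr_l] at hc; simp at hc
      · rw [e1, cr_r] at hc; simp at hc

theorem seg_congr {a b c d : V} (h : s(a, b) = s(c, d)) :
    segment ℝ (pos a) (pos b) = segment ℝ (pos c) (pos d) := by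
  rcases Sym2.eq_iff.1 h with ⟨rfl, rfl⟩ | ⟨rfl, rfl⟩
  · rfl
  · exact segment_symm ℝ _ _

theorem Cert.edgeInt (C : Cert pos src tgt X) (ε : I) (x : ℝ × ℝ) :
    x ∈ (sD pos C.hpos src tgt).edgeInt s(src ε, tgt ε) ↔
    x ∈ segment ℝ (pos (src ε)) (pos (tgt ε)) ∧ x ≠ pos (src ε) ∧ x ≠ pos (tgt ε) := by
  rw [edgeInt_eq _ (C.adj ε)]
  unfold Drawing.arcInt
  rw [Set.mem_sdiff]
  simp only [Set.mem_insert_iff, Set.mem_singleton_iff, not_or]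
  rfl

theorem Cert.X_of_meet (C : Cert pos src tgt X) {ε δ : I} (hne : ε ≠ δ) {x : ℝ × ℝ}
    (h1 : x ∈ (sD pos C.hpos src tgt).edgeInt s(src ε, tgt ε))
    (h2 : x ∈ (sD pos C.hpos src tgt).edgeInt s(src δ, tgt δ)) : X ε δ := by
  rw [C.edgeInt] at h1 h2
  by_contra hX
  rcases C.hA ε δ hne hX with ⟨u, v, w, e1, e2, hc⟩ | hc | hc
  · have hx := share_pt hc (seg_congr (pos := pos) e1 ▸ h1.1) (seg_congr (pos := pos) e2 ▸ h2.1)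
    rcases Sym2.eq_iff.1 e1 with ⟨rfl, rfl⟩ | ⟨rfl, rfl⟩
    · exact h1.2.1 hx
    · exact h1.2.2 hx
  · exact sameside hc h1.1 h2.1
  · exact sameside hc h2.1 h1.1

theorem Cert.cross_iff (C : Cert pos src tgt X) (e f : Sym2 V) : (sD pos C.hpos src tgt).Cross e f ↔
    ∃ ε δ, e = s(src ε, tgt ε) ∧ f = s(src δ, tgt δ) ∧ X ε δ := by
  constructor
  · intro h
    have hm := cross_mem _ h
    rw [C.edgeSet_eq] at hm
    obtain ⟨⟨ε, rfl⟩, ⟨δ, rfl⟩⟩ := hm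
    obtain ⟨hne, x, h1, h2⟩ := h
    exact ⟨ε, δ, rfl, rfl, C.X_of_meet (fun h => hne (by rw [h])) h1 h2⟩
  · rintro ⟨ε, δ, rfl, rfl, hX⟩
    obtain ⟨h1, h2⟩ := C.hX ε δ hX
    obtain ⟨x, hx1, hx2⟩ := straddle_exists h1 h2
    refine ⟨?_, x, ?_, ?_⟩
    · intro he
      have := C.edge_inj he
      subst this
      rw [cr_l] at h1; simp at h1
    · rw [C.edgeInt]
      refine ⟨hx1, ?_, ?_⟩
      · rintro rfl; rw [cr_seg hx2] at h2; simp at h2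
      · rintro rfl; rw [cr_seg hx2] at h2; simp at h2
    · rw [C.edgeInt]
      refine ⟨hx2, ?_, ?_⟩
      · rintro rfl; rw [cr_seg hx1] at h1; simp at h1
      · rintro rfl; rw [cr_seg hx1] at h1; simp at h1

theorem Cert.onePlanar (C : Cert pos src tgt X) : (sD pos C.hpos src tgt).IsOnePlanar := by
  intro e f hf g hg
  obtain ⟨ε, δ, rfl, rfl, hX⟩ := (C.cross_iff _ _).1 hf
  obtain ⟨ε', δ', h, rfl, hX'⟩ := (C.cross_iff _ _).1 hg
  have := C.edge_inj h
  subst this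
  rw [C.hX1 _ _ _ hX hX']

theorem Cert.good (C : Cert pos src tgt X) : (sD pos C.hpos src tgt).IsGood := by
  refine ⟨?_, ?_, ?_⟩
  · intro w u v h hw
    have hw : pos w ∈ segment ℝ (pos u) (pos v) := hw
    obtain ⟨ε, hε⟩ : s(u, v) ∈ Set.range fun ε => s(src ε, tgt ε) := by
      rw [← C.edgeSet_eq]; exact h
    have hε : s(src ε, tgt ε) = s(u, v) := hε
    rw [← seg_congr (pos := pos) hε] at hw
    suffices w = src ε ∨ w = tgt ε by
      rcases Sym2.eq_iff.1 hε with ⟨h1, h2⟩ | ⟨h1, h2⟩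
      · rwa [h1, h2] at this
      · rw [h1, h2] at this; exact this.symm
    obtain ⟨δ, hδ⟩ := C.hinc w
    by_cases hne : ε = δ
    · subst hne; exact hδ
    have hwδ : pos w ∈ segment ℝ (pos (src δ)) (pos (tgt δ)) := by
      rcases hδ with rfl | rfl
      · exact left_mem_segment ℝ _ _
      · exact right_mem_segment ℝ _ _
    by_cases hX : X ε δ
    · obtain ⟨h1, -⟩ := C.hX ε δ hX
      have h0 := cr_seg hw
      rcases hδ with rfl | rfl <;> (rw [h0] at h1; simp at h1)
    · rcases C.hA ε δ hne hX with ⟨u, v, w', e1, e2, hc⟩ | hc | hc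
      · have hx := share_pt hc (seg_congr (pos := pos) e1 ▸ hw) (seg_congr (pos := pos) e2 ▸ hwδ)
        have := C.hpos hx
        subst this
        rcases Sym2.eq_iff.1 e1 with ⟨h, _⟩ | ⟨_, h⟩
        · exact Or.inl h.symm
        · exact Or.inr h.symm
      · exact (sameside hc hw hwδ).elim
      · exact (sameside hc hwδ hw).elim
  · intro e f hne x hx y hy
    have hc : (sD pos C.hpos src tgt).Cross e f := ⟨hne, x, hx⟩
    obtain ⟨ε, δ, rfl, rfl, hX⟩ := (C.cross_iff _ _).1 hc
    obtain ⟨h1, -⟩ := C.hX ε δ hX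
    exact straddle_unique h1 ((C.edgeInt _ _).1 hx.1).1 ((C.edgeInt _ _).1 hx.2).1
      ((C.edgeInt _ _).1 hy.1).1 ((C.edgeInt _ _).1 hy.2).1
  · intro u v w h1 h2 hvw
    rw [Set.eq_empty_iff_forall_notMem]
    rintro x ⟨hx1, hx2⟩
    rw [← edgeInt_eq] at hx1 hx2
    have hc : (sD pos C.hpos src tgt).Cross s(u, v) s(u, w) :=
      ⟨fun h => hvw (Sym2.congr_right.1 h), x, hx1, hx2⟩
    obtain ⟨ε, δ, e1, e2, hX⟩ := (C.cross_iff _ _).1 hc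
    obtain ⟨g1, -⟩ := C.hX ε δ hX
    rcases Sym2.eq_iff.1 e1 with ⟨rfl, rfl⟩ | ⟨rfl, rfl⟩ <;>
    rcases Sym2.eq_iff.1 e2 with ⟨h, rfl⟩ | ⟨h, rfl⟩ <;>
    · simp only [← h, cr_l, cr_r, zero_mul, mul_zero, lt_irrefl] at g1

end straight

end VK
namespace VK

/-- Symbolic points: coefficients of `w`, `s`, `t` in the first coordinate, and the second
coordinate. -/
abbrev SP := ℤ × ℤ × ℤ × ℤ
abbrev V3 := ℤ × ℤ × ℤ
abbrev Rays := V3 × V3 × V3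

def dot3 (a b : V3) : ℤ := a.1 * b.1 + a.2.1 * b.2.1 + a.2.2 * b.2.2

def lf (P Q R : SP) : V3 :=
  ((Q.1 - P.1) * (R.2.2.2 - P.2.2.2) - (Q.2.2.2 - P.2.2.2) * (R.1 - P.1),
   (Q.2.1 - P.2.1) * (R.2.2.2 - P.2.2.2) - (Q.2.2.2 - P.2.2.2) * (R.2.1 - P.2.1),
   (Q.2.2.1 - P.2.2.1) * (R.2.2.2 - P.2.2.2) - (Q.2.2.2 - P.2.2.2) * (R.2.2.1 - P.2.2.1))

def isPos (R : Rays) (L : V3) : Bool :=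
  decide (0 ≤ dot3 L R.1) && decide (0 ≤ dot3 L R.2.1) && decide (0 < dot3 L R.2.2)
def isNeg (R : Rays) (L : V3) : Bool :=
  decide (dot3 L R.1 ≤ 0) && decide (dot3 L R.2.1 ≤ 0) && decide (dot3 L R.2.2 < 0)
def isNz (R : Rays) (L : V3) : Bool := isPos R L || isNeg R L
def isEq (R : Rays) (P Q : SP) : Bool :=
  let d : V3 := (P.1 - Q.1, P.2.1 - Q.2.1, P.2.2.1 - Q.2.2.1)
  decide (P.2.2.2 = Q.2.2.2) && decide (dot3 d R.1 = 0) && decide (dot3 d R.2.1 = 0) &&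
    decide (dot3 d R.2.2 = 0)
def isSame (R : Rays) (L M : V3) : Bool := (isPos R L && isPos R M) || (isNeg R L && isNeg R M)
def isOpp (R : Rays) (L M : V3) : Bool := (isPos R L && isNeg R M) || (isNeg R L && isPos R M)

def chk (x : Bool) (R : Rays) (A B C D : SP) : Bool :=
  if x then isOpp R (lf A B C) (lf A B D) && isOpp R (lf C D A) (lf C D B)
  else (isEq R A C && isNz R (lf A B D)) || (isEq R A D && isNz R (lf A B C)) ||
    (isEq R B C && isNz R (lf B A D)) || (isEq R B D && isNz R (lf B A C)) ||
    isSame R (lf A B C) (lf A B D) || isSame R (lf C D A) (lf C D B)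

def ev3 (L : V3) (w s t : ℝ) : ℝ := L.1 * w + L.2.1 * s + L.2.2 * t
def ev (P : SP) (w s t : ℝ) : ℝ × ℝ := (P.1 * w + P.2.1 * s + P.2.2.1 * t, P.2.2.2)

theorem cr_ev (P Q R : SP) (w s t : ℝ) :
    cr (ev P w s t) (ev Q w s t) (ev R w s t) = ev3 (lf P Q R) w s t := by
  simp only [cr, ev, ev3, lf]
  push_cast
  ring

/-- `(w, s, t)` lies in the cone spanned by the rays. -/
def InCone (R : Rays) (w s t : ℝ) : Prop := ∃ a b c : ℝ, 0 ≤ a ∧ 0 ≤ b ∧ 0 < c ∧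
  w = a * R.1.1 + b * R.2.1.1 + c * R.2.2.1 ∧
  s = a * R.1.2.1 + b * R.2.1.2.1 + c * R.2.2.2.1 ∧
  t = a * R.1.2.2 + b * R.2.1.2.2 + c * R.2.2.2.2

theorem ev3_cone {R : Rays} {w s t : ℝ} (h : InCone R w s t) : ∃ a b c : ℝ, 0 ≤ a ∧ 0 ≤ b ∧ 0 < c ∧
    ∀ L : V3, ev3 L w s t = a * dot3 L R.1 + b * dot3 L R.2.1 + c * dot3 L R.2.2 := by
  obtain ⟨a, b, c, ha, hb, hc, h1, h2, h3⟩ := h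
  refine ⟨a, b, c, ha, hb, hc, fun L => ?_⟩
  simp only [ev3, dot3]
  rw [h1, h2, h3]
  push_cast
  ring

theorem isPos_sound {R : Rays} {w s t : ℝ} (h : InCone R w s t) {L : V3} (hL : isPos R L = true) :
    0 < ev3 L w s t := by
  obtain ⟨a, b, c, ha, hb, hc, h⟩ := ev3_cone h
  simp only [isPos, Bool.and_eq_true, decide_eq_true_eq] at hL
  obtain ⟨⟨h1, h2⟩, h3⟩ := hL
  rw [h]
  have h1 : (0 : ℝ) ≤ dot3 L R.1 := by exact_mod_cast h1
  have h2 : (0 : ℝ) ≤ dot3 L R.2.1 := by exact_mod_cast h2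
  have h3 : (0 : ℝ) < dot3 L R.2.2 := by exact_mod_cast h3
  positivity

theorem isNeg_sound {R : Rays} {w s t : ℝ} (h : InCone R w s t) {L : V3} (hL : isNeg R L = true) :
    ev3 L w s t < 0 := by
  obtain ⟨a, b, c, ha, hb, hc, h⟩ := ev3_cone h
  simp only [isNeg, Bool.and_eq_true, decide_eq_true_eq] at hL
  obtain ⟨⟨h1, h2⟩, h3⟩ := hL
  rw [h]
  have h1 : (dot3 L R.1 : ℝ) ≤ 0 := by exact_mod_cast h1
  have h2 : (dot3 L R.2.1 : ℝ) ≤ 0 := by exact_mod_cast h2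
  have h3 : (dot3 L R.2.2 : ℝ) < 0 := by exact_mod_cast h3
  have := mul_nonpos_of_nonneg_of_nonpos ha h1
  have := mul_nonpos_of_nonneg_of_nonpos hb h2
  have := mul_neg_of_pos_of_neg hc h3
  linarith

theorem isNz_sound {R : Rays} {w s t : ℝ} (h : InCone R w s t) {L : V3} (hL : isNz R L = true) :
    ev3 L w s t ≠ 0 := by
  simp only [isNz, Bool.or_eq_true] at hL
  rcases hL with hL | hL
  · exact (isPos_sound h hL).ne'
  · exact (isNeg_sound h hL).ne

theorem isSame_sound {R : Rays} {w s t : ℝ} (h : InCone R w s t) {L M : V3}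
    (hL : isSame R L M = true) : 0 < ev3 L w s t * ev3 M w s t := by
  simp only [isSame, Bool.or_eq_true, Bool.and_eq_true] at hL
  rcases hL with ⟨h1, h2⟩ | ⟨h1, h2⟩
  · exact mul_pos (isPos_sound h h1) (isPos_sound h h2)
  · exact mul_pos_of_neg_of_neg (isNeg_sound h h1) (isNeg_sound h h2)

theorem isOpp_sound {R : Rays} {w s t : ℝ} (h : InCone R w s t) {L M : V3}
    (hL : isOpp R L M = true) : ev3 L w s t * ev3 M w s t < 0 := by
  simp only [isOpp, Bool.or_eq_true, Bool.and_eq_true] at hL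
  rcases hL with ⟨h1, h2⟩ | ⟨h1, h2⟩
  · exact mul_neg_of_pos_of_neg (isPos_sound h h1) (isNeg_sound h h2)
  · exact mul_neg_of_neg_of_pos (isNeg_sound h h1) (isPos_sound h h2)

theorem isEq_sound {R : Rays} {w s t : ℝ} (h : InCone R w s t) {P Q : SP}
    (hL : isEq R P Q = true) : ev P w s t = ev Q w s t := by
  obtain ⟨a, b, c, ha, hb, hc, h⟩ := ev3_cone h
  simp only [isEq, Bool.and_eq_true, decide_eq_true_eq] at hL
  obtain ⟨⟨⟨h0, h1⟩, h2⟩, h3⟩ := hL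
  have := h (P.1 - Q.1, P.2.1 - Q.2.1, P.2.2.1 - Q.2.2.1)
  rw [h1, h2, h3] at this
  simp only [ev3] at this
  push_cast at this
  simp only [ev]
  ext
  · simp only; linarith
  · simp only [h0]

def Geo4 (X : Prop) (a b c d : ℝ × ℝ) : Prop :=
  (X → cr a b c * cr a b d < 0 ∧ cr c d a * cr c d b < 0) ∧
  (¬ X → (a = c ∧ cr a b d ≠ 0) ∨ (a = d ∧ cr a b c ≠ 0) ∨ (b = c ∧ cr b a d ≠ 0) ∨
    (b = d ∧ cr b a c ≠ 0) ∨ 0 < cr a b c * cr a b d ∨ 0 < cr c d a * cr c d b)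

theorem Geo4.symm {X : Prop} {a b c d : ℝ × ℝ} (h : Geo4 X a b c d) : Geo4 X c d a b := by
  refine ⟨fun hX => (h.1 hX).symm, fun hX => ?_⟩
  rcases h.2 hX with ⟨rfl, g⟩ | ⟨rfl, g⟩ | ⟨rfl, g⟩ | ⟨rfl, g⟩ | g | g
  · rw [cr_swap] at g; exact Or.inl ⟨rfl, neg_ne_zero.1 g⟩
  · rw [cr_swap] at g; exact Or.inr (Or.inr (Or.inl ⟨rfl, neg_ne_zero.1 g⟩))
  · rw [cr_swap] at g; exact Or.inr (Or.inl ⟨rfl, neg_ne_zero.1 g⟩)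
  · rw [cr_swap] at g; exact Or.inr (Or.inr (Or.inr (Or.inl ⟨rfl, neg_ne_zero.1 g⟩)))
  · exact Or.inr (Or.inr (Or.inr (Or.inr (Or.inr g))))
  · exact Or.inr (Or.inr (Or.inr (Or.inr (Or.inl g))))

theorem chk_sound {x : Bool} {R : Rays} {w s t : ℝ} (h : InCone R w s t) {A B C D : SP}
    (hc : chk x R A B C D = true) :
    Geo4 (x = true) (ev A w s t) (ev B w s t) (ev C w s t) (ev D w s t) := by
  cases x
  · refine ⟨fun h => absurd h (by simp), fun _ => ?_⟩
    simp only [chk, Bool.or_eq_true, Bool.and_eq_true, Bool.false_eq_true, if_false] at hc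
    simp only [cr_ev]
    rcases hc with ((((⟨h1, h2⟩ | ⟨h1, h2⟩) | ⟨h1, h2⟩) | ⟨h1, h2⟩) | h1) | h1
    · exact Or.inl ⟨isEq_sound h h1, isNz_sound h h2⟩
    · exact Or.inr (Or.inl ⟨isEq_sound h h1, isNz_sound h h2⟩)
    · exact Or.inr (Or.inr (Or.inl ⟨isEq_sound h h1, isNz_sound h h2⟩))
    · exact Or.inr (Or.inr (Or.inr (Or.inl ⟨isEq_sound h h1, isNz_sound h h2⟩)))
    · exact Or.inr (Or.inr (Or.inr (Or.inr (Or.inl (isSame_sound h h1)))))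
    · exact Or.inr (Or.inr (Or.inr (Or.inr (Or.inr (isSame_sound h h1)))))
  · refine ⟨fun _ => ?_, fun h => absurd rfl h⟩
    simp only [chk, Bool.and_eq_true, if_true] at hc
    simp only [cr_ev]
    exact ⟨isOpp_sound h hc.1, isOpp_sound h hc.2⟩

/-- endpoints of the 18 edge types of a sector -/
def e1 : Fin 18 → Fin 9 := ![2, 4, 2, 3, 2, 3, 0, 0, 1, 1, 6, 6, 6, 6, 3, 5, 0, 1]
def e2 : Fin 18 → Fin 9 := ![3, 5, 4, 5, 5, 4, 2, 3, 4, 5, 3, 5, 7, 8, 7, 8, 6, 6]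
/-- crossing partners -/
def xp (τ σ : Fin 18) : Bool :=
  (τ = 16 && σ = 14) || (τ = 14 && σ = 16) || (τ = 17 && σ = 15) || (τ = 15 && σ = 17) ||
  (τ = 4 && σ = 5) || (τ = 5 && σ = 4)

/-- coordinates in an ordinary sector -/
def tabN : Fin 9 → V3 := ![(0, 0, 10), (0, 0, -10), (0, 32, 1), (0, 20, 3), (0, 32, -1),
  (0, 20, -3), (0, 18, 0), (0, 16, 1), (0, 16, -1)]
/-- coordinates in the last sector -/
def tabF : Fin 9 → V3 := ![(0, 0, 10), (0, 0, -10), (0, 32, 1), (-40, 0, 22), (0, 32, -1),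
  (-40, 0, -22), (62, 0, 0), (32, 0, 1), (32, 0, -1)]

def slS (p : V3) : SP := (p.1, p.2.1, 0, p.2.2)
def slT (p : V3) : SP := (p.1, 0, p.2.1, p.2.2)

def chkE (x : Bool) (R : Rays) (T T' : Fin 9 → V3) (τ σ : Fin 18) : Bool :=
  chk x R (slS (T (e1 τ))) (slS (T (e2 τ))) (slT (T' (e1 σ))) (slT (T' (e2 σ)))

theorem tab1 : ∀ τ σ : Fin 18, τ ≠ σ →
    chkE (xp τ σ) ((0, 0, 0), (0, 0, 0), (0, 1, 1)) tabN tabN τ σ = true := by decide +kernel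
theorem tab2 : ∀ τ σ : Fin 18,
    chkE false ((0, 0, 0), (0, 0, 0), (0, 2, 1)) tabN tabN τ σ = true := by decide +kernel
theorem tab3 : ∀ τ σ : Fin 18,
    chkE false ((0, 0, 0), (0, 1, 0), (0, 4, 1)) tabN tabN τ σ = true := by decide +kernel
theorem tab4 : ∀ τ σ : Fin 18,
    chkE false ((0, 0, 0), (0, 0, 0), (2, 2, 1)) tabN tabF τ σ = true := by decide +kernel
theorem tab5 : ∀ τ σ : Fin 18,
    chkE false ((0, 0, 0), (1, 1, 0), (4, 4, 1)) tabN tabF τ σ = true := by decide +kernel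
theorem tab6 : ∀ τ σ : Fin 18,
    chkE false ((0, 0, 0), (1, 0, 0), (4, 2, 1)) tabN tabF τ σ = true := by decide +kernel
theorem tab7 : ∀ τ σ : Fin 18,
    chkE false ((1, 0, 0), (2, 1, 0), (8, 4, 1)) tabN tabF τ σ = true := by decide +kernel
theorem tab8 : ∀ τ σ : Fin 18, τ ≠ σ →
    chkE (xp τ σ) ((0, 0, 0), (1, 0, 0), (2, 1, 1)) tabF tabF τ σ = true := by decide +kernel

end VK
set_option linter.unusedSectionVars false

namespace VK

section pos

variable {r : ℕ} [NeZero r]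

/-- the vertices of a sector -/
def lab (i : Fin r) : Fin 9 → W r :=
  ![wP true, wP false, wA true i, wB true i, wA false i, wB false i, wX i,
    wA true (i + 1), wA false (i + 1)]

/-- sign of a side -/
def sg (f : Bool) : ℝ := if f then 1 else -1

/-- scale of a sector -/
noncomputable def sc (i : Fin r) : ℝ := (1 / 2) ^ i.val

/-- positions of the vertices -/
noncomputable def posW : W r → ℝ × ℝ
  | Sum.inl f => (0, 10 * sg f)
  | Sum.inr (Sum.inl f, i) => (32 * sc i, sg f)
  | Sum.inr (Sum.inr (Sum.inl f), i) =>
      if i.val + 1 = r then (-40, 22 * sg f) else (20 * sc i, 3 * sg f)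
  | Sum.inr (Sum.inr (Sum.inr ()), i) => if i.val + 1 = r then (62, 0) else (18 * sc i, 0)

theorem sc_pos (i : Fin r) : 0 < sc i := by unfold sc; positivity

theorem sc_le (i : Fin r) : sc i ≤ 1 := by
  unfold sc; exact pow_le_one₀ (by norm_num) (by norm_num)

theorem sc_inj {i j : Fin r} (h : sc i = sc j) : i = j := by
  unfold sc at h
  apply Fin.ext
  exact pow_right_injective₀ (by norm_num) (by norm_num) h

theorem sc_add {i j : Fin r} (d : ℕ) (h : i.val + d ≤ j.val) : 2 ^ d * sc j ≤ sc i := by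
  unfold sc
  obtain ⟨e, he⟩ := Nat.exists_eq_add_of_le h
  rw [he, pow_add, pow_add]
  have h1 : ((2:ℝ)) ^ d * (1 / 2) ^ d = 1 := by rw [← mul_pow]; norm_num
  have h2 : ((1:ℝ) / 2) ^ e ≤ 1 := pow_le_one₀ (by norm_num) (by norm_num)
  have h3 : (0:ℝ) < (1 / 2) ^ i.val := by positivity
  calc (2:ℝ) ^ d * ((1 / 2) ^ i.val * (1 / 2) ^ d * (1 / 2) ^ e)
      = (1 / 2) ^ i.val * ((2:ℝ) ^ d * (1 / 2) ^ d) * (1 / 2) ^ e := by ring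
    _ ≤ (1 / 2) ^ i.val := by rw [h1]; nlinarith

theorem sc_succ {i j : Fin r} (h : j.val = i.val + 1) : sc i = 2 * sc j := by
  unfold sc
  rw [h, pow_succ]; ring

theorem sc_zero {i : Fin r} (h : i.val = 0) : sc i = 1 := by
  unfold sc; rw [h]; simp

theorem sg_inj {f g : Bool} (h : sg f = sg g) : f = g := by
  cases f <;> cases g <;> simp [sg] at h ⊢ <;> norm_num at h

theorem sg_cases (f : Bool) : sg f = 1 ∨ sg f = -1 := by
  cases f <;> simp [sg]

theorem posW_inj : Function.Injective (posW (r := r)) := by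
  rintro (f | ⟨f | f | ⟨⟩, i⟩) (g | ⟨g | g | ⟨⟩, j⟩) h <;> simp only [posW] at h
  · have := (Prod.ext_iff.1 h).2
    simp only at this
    rw [sg_inj (by linarith : sg f = sg g)]
  all_goals
    try have hi := sc_pos i
    try have hj := sc_pos j
    try have hi' := sc_le i
    try have hj' := sc_le j
    try have hf := sg_cases f
    try have hg := sg_cases g
    try split_ifs at h
    all_goals
      have h1 := (Prod.ext_iff.1 h).1
      have h2 := (Prod.ext_iff.1 h).2
      simp only at h1 h2
      first
      | (exfalso; linarith)
      | (exfalso; rcases hf with hf | hf <;> rcases hg with hg | hg <;> linarith)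
      | (exfalso; rcases hf with hf | hf <;> linarith)
      | (exfalso; rcases hg with hg | hg <;> linarith)
      | (rw [sg_inj (by linarith : sg f = sg g), sc_inj (by linarith : sc i = sc j)])
      | (rw [sc_inj (by linarith : sc i = sc j)])
      | (rw [sg_inj (by linarith : sg f = sg g), (Fin.ext (by omega) : i = j)])
      | (rw [(Fin.ext (by omega) : i = j)])

theorem val_succ {i : Fin r} (h : i.val + 1 < r) : (i + 1).val = i.val + 1 := by
  rw [Fin.val_add_one_of_lt']
  exact h

theorem val_last {i : Fin r} (h : i.val + 1 = r) : (i + 1).val = 0 := by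
  have : r ≠ 0 := NeZero.ne r
  rw [Fin.val_add, Fin.val_one', Nat.add_mod_mod, h, Nat.mod_self]

theorem posN_S {i : Fin r} (h : i.val + 1 < r) (w t : ℝ) (κ : Fin 9) :
    posW (lab i κ) = ev (slS (tabN κ)) w (sc i) t := by
  have h1 := sc_succ (val_succ h)
  have h2 : ¬ (i.val + 1 = r) := h.ne
  fin_cases κ <;> simp [lab, posW, ev, slS, tabN, sg, h2] <;> linarith

theorem posN_T {i : Fin r} (h : i.val + 1 < r) (w s : ℝ) (κ : Fin 9) :
    posW (lab i κ) = ev (slT (tabN κ)) w s (sc i) := by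
  have h1 := sc_succ (val_succ h)
  have h2 : ¬ (i.val + 1 = r) := h.ne
  fin_cases κ <;> simp [lab, posW, ev, slT, tabN, sg, h2] <;> linarith

theorem posF_S {i : Fin r} (h : i.val + 1 = r) (t : ℝ) (κ : Fin 9) :
    posW (lab i κ) = ev (slS (tabF κ)) 1 (sc i) t := by
  have h1 := sc_zero (val_last h)
  fin_cases κ <;> simp [lab, posW, ev, slS, tabF, sg, h, h1]

theorem posF_T {i : Fin r} (h : i.val + 1 = r) (s : ℝ) (κ : Fin 9) :
    posW (lab i κ) = ev (slT (tabF κ)) 1 s (sc i) := by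
  have h1 := sc_zero (val_last h)
  fin_cases κ <;> simp [lab, posW, ev, slT, tabF, sg, h, h1]

/-- edges -/
def esrc (ε : Fin r × Fin 18) : W r := lab ε.1 (e1 ε.2)
def etgt (ε : Fin r × Fin 18) : W r := lab ε.1 (e2 ε.2)
/-- crossing pairs -/
def eX (ε δ : Fin r × Fin 18) : Prop := ε.1 = δ.1 ∧ xp ε.2 δ.2 = true

theorem geo_lt {i j : Fin r} (hij : i.val < j.val) (τ σ : Fin 18) :
    Geo4 (false = true) (posW (lab i (e1 τ))) (posW (lab i (e2 τ)))
      (posW (lab j (e1 σ))) (posW (lab j (e2 σ))) := by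
  have hi : i.val + 1 < r := by have := j.isLt; omega
  have ti := sc_pos i
  have tj := sc_pos j
  by_cases hj : j.val + 1 < r
  · rw [posN_S hi 0 (sc j), posN_S hi 0 (sc j), posN_T hj 0 (sc i), posN_T hj 0 (sc i)]
    by_cases ha : j.val = i.val + 1
    · refine chk_sound ⟨0, 0, sc j, le_rfl, le_rfl, tj, ?_, ?_, ?_⟩ (tab2 τ σ)
      · simp
      · rw [sc_succ ha]; push_cast; ring
      · push_cast; ring
    · have := sc_add (i := i) (j := j) 2 (by omega)
      refine chk_sound ⟨0, sc i - 4 * sc j, sc j, le_rfl, by linarith, tj, ?_, ?_, ?_⟩ (tab3 τ σ)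
      · simp
      · push_cast; ring
      · push_cast; ring
  · have hj : j.val + 1 = r := by have := j.isLt; omega
    rw [posN_S hi 1 (sc j), posN_S hi 1 (sc j), posF_T hj (sc i), posF_T hj (sc i)]
    by_cases h0 : i.val = 0
    · have e0 := sc_zero h0
      by_cases ha : j.val = i.val + 1
      · have := sc_succ ha
        refine chk_sound ⟨0, 0, sc j, le_rfl, le_rfl, tj, ?_, ?_, ?_⟩ (tab4 τ σ) <;>
        push_cast <;> linarith
      · have := sc_add (i := i) (j := j) 2 (by omega)
        refine chk_sound ⟨0, 1 - 4 * sc j, sc j, le_rfl, by linarith, tj, ?_, ?_, ?_⟩ (tab5 τ σ) <;>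
        push_cast <;> linarith
    · have h2 := sc_add (i := 0) (j := i) 1 (by simp; omega)
      rw [sc_zero (i := (0 : Fin r)) (by simp)] at h2
      by_cases ha : j.val = i.val + 1
      · have := sc_succ ha
        refine chk_sound ⟨0, 1 - 4 * sc j, sc j, le_rfl, by linarith, tj, ?_, ?_, ?_⟩ (tab6 τ σ) <;>
        push_cast <;> linarith
      · have := sc_add (i := i) (j := j) 2 (by omega)
        refine chk_sound ⟨1 - 2 * sc i, sc i - 4 * sc j, sc j, by linarith, by linarith, tj,
          ?_, ?_, ?_⟩ (tab7 τ σ) <;>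
        push_cast <;> linarith

theorem geo_eq (hr : 2 ≤ r) (i : Fin r) {τ σ : Fin 18} (hne : τ ≠ σ) :
    Geo4 (xp τ σ = true) (posW (lab i (e1 τ))) (posW (lab i (e2 τ)))
      (posW (lab i (e1 σ))) (posW (lab i (e2 σ))) := by
  have ti := sc_pos i
  by_cases hi : i.val + 1 < r
  · rw [posN_S hi 0 (sc i), posN_S hi 0 (sc i), posN_T hi 0 (sc i), posN_T hi 0 (sc i)]
    refine chk_sound ⟨0, 0, sc i, le_rfl, le_rfl, ti, ?_, ?_, ?_⟩ (tab1 τ σ hne) <;>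
    push_cast <;> linarith
  · have hi : i.val + 1 = r := by have := i.isLt; omega
    rw [posF_S hi (sc i), posF_S hi (sc i), posF_T hi (sc i), posF_T hi (sc i)]
    have h2 := sc_add (i := 0) (j := i) 1 (by simp; omega)
    rw [sc_zero (i := (0 : Fin r)) (by simp)] at h2
    refine chk_sound ⟨0, 1 - 2 * sc i, sc i, le_rfl, by linarith, ti, ?_, ?_, ?_⟩ (tab8 τ σ hne) <;>
    push_cast <;> linarith

theorem geo (hr : 2 ≤ r) {ε δ : Fin r × Fin 18} (hne : ε ≠ δ) :
    Geo4 (eX ε δ) (posW (esrc ε)) (posW (etgt ε)) (posW (esrc δ)) (posW (etgt δ)) := by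
  obtain ⟨i, τ⟩ := ε
  obtain ⟨j, σ⟩ := δ
  rcases lt_trichotomy i.val j.val with h | h | h
  · have h0 : eX (i, τ) (j, σ) ↔ (false = true) := by
      simp only [eX, Bool.false_eq_true, iff_false, not_and]
      rintro rfl; omega
    rw [h0]
    exact geo_lt h τ σ
  · have h := Fin.ext h
    subst h
    have h0 : eX (i, τ) (i, σ) ↔ (xp τ σ = true) := by simp [eX]
    rw [h0]
    exact geo_eq hr i (fun h => hne (by rw [h]))
  · have h0 : eX (i, τ) (j, σ) ↔ (false = true) := by
      simp only [eX, Bool.false_eq_true, iff_false, not_and]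
      rintro rfl; omega
    rw [h0]
    exact (geo_lt h σ τ).symm

theorem xp_ne : ∀ τ : Fin 18, xp τ τ ≠ true := by decide
theorem xp_uniq : ∀ τ σ σ' : Fin 18, xp τ σ = true → xp τ σ' = true → σ = σ' := by
  decide +kernel

theorem eX_ne {ε δ : Fin r × Fin 18} (h : eX ε δ) : ε ≠ δ := by
  rintro rfl
  exact xp_ne _ h.2

theorem lab_ne (τ : Fin 18) (i : Fin r) : lab i (e1 τ) ≠ lab i (e2 τ) := by
  fin_cases τ <;> simp [lab, e1, e2]

theorem certW (hr : 2 ≤ r) : Cert (posW (r := r)) esrc etgt eX where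
  hpos := posW_inj
  hne ε := lab_ne _ _
  hinc w := by
    rcases w with f | ⟨f | f | ⟨⟩, i⟩
    · cases f
      · exact ⟨(0, 8), Or.inl rfl⟩
      · exact ⟨(0, 6), Or.inl rfl⟩
    · cases f
      · exact ⟨(i, 1), Or.inl rfl⟩
      · exact ⟨(i, 0), Or.inl rfl⟩
    · cases f
      · exact ⟨(i, 1), Or.inr rfl⟩
      · exact ⟨(i, 0), Or.inr rfl⟩
    · exact ⟨(i, 10), Or.inl rfl⟩
  hX ε δ h := (geo hr (eX_ne h)).1 h
  hA ε δ hne hX := by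
    rcases (geo hr hne).2 hX with ⟨h, g⟩ | ⟨h, g⟩ | ⟨h, g⟩ | ⟨h, g⟩ | g | g
    · exact Or.inl ⟨esrc ε, etgt ε, etgt δ, rfl, by rw [posW_inj h], g⟩
    · exact Or.inl ⟨esrc ε, etgt ε, esrc δ, rfl, by rw [posW_inj h, Sym2.eq_swap], g⟩
    · exact Or.inl ⟨etgt ε, esrc ε, etgt δ, Sym2.eq_swap, by rw [posW_inj h], g⟩
    · exact Or.inl ⟨etgt ε, esrc ε, esrc δ, Sym2.eq_swap, by rw [posW_inj h, Sym2.eq_swap], g⟩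
    · exact Or.inr (Or.inl g)
    · exact Or.inr (Or.inr g)
  hX1 ε δ δ' h h' := Prod.ext (h.1.symm.trans h'.1) (xp_uniq _ _ _ h.2 h'.2)

end pos

end VK
namespace VK

theorem Cert.map {V U I : Type} {pos : V → ℝ × ℝ} {src tgt : I → V} {X : I → I → Prop}
    (C : Cert pos src tgt X) (φ : V ≃ U) :
    Cert (pos ∘ φ.symm) (φ ∘ src) (φ ∘ tgt) X where
  hpos := C.hpos.comp φ.symm.injective
  hne ε h := C.hne ε (φ.injective h)
  hinc w := by
    obtain ⟨ε, h⟩ := C.hinc (φ.symm w)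
    refine ⟨ε, ?_⟩
    rcases h with h | h
    · left; simp [← h]
    · right; simp [← h]
  hX ε δ h := by simpa using C.hX ε δ h
  hA ε δ hne h := by
    rcases C.hA ε δ hne h with ⟨u, v, w, h1, h2, h3⟩ | g | g
    · refine Or.inl ⟨φ u, φ v, φ w, ?_, ?_, by simpa using h3⟩
      · simpa using congrArg (Sym2.map φ) h1
      · simpa using congrArg (Sym2.map φ) h2
    · right; left; simpa using g
    · right; right; simpa using g
  hX1 := C.hX1

theorem kconn_map {V U : Type} {G : SimpleGraph V} {H : SimpleGraph U} (φ : V ≃ U)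
    (hφ : ∀ u v, G.Adj u v → H.Adj (φ u) (φ v)) {k : ℕ} (h : KConnected G k) :
    KConnected H k := by
  intro S hS
  have h1 : (φ ⁻¹' S).ncard < k := by
    rw [Set.ncard_preimage_of_injective_subset_range φ.injective (by simp)]
    exact hS
  have hc := h _ h1
  obtain ⟨w⟩ := hc.nonempty
  refine connected_of_rch (φ w.1) w.2 ?_
  intro v hv
  have hv' : φ.symm v ∈ (φ ⁻¹' S)ᶜ := by simpa using hv
  obtain ⟨p⟩ := hc.preconnected ⟨φ.symm v, hv'⟩ w
  have key : ∀ (a b : ((φ ⁻¹' S)ᶜ : Set V)), (G.induce (φ ⁻¹' S)ᶜ).Walk a b →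
      Rch H S (φ a.1) (φ b.1) := by
    intro a b p
    induction p with
    | @nil a => exact Rch.refl a.2
    | @cons a b c hadj _ ih => 
      have h1 : Rch H S (φ a.1) (φ b.1) := Rch.step (show φ a.1 ∉ S from a.2) (show φ b.1 ∉ S from b.2) (hφ _ _ hadj)
      exact h1.trans ih
  simpa using key _ _ p

section fam

variable {r : ℕ} [NeZero r]

theorem famW (hr : 2 ≤ r) : Fam (sG (esrc (r := r)) etgt) where
  hAB f f' i := by
    cases f <;> cases f'
    · exact (certW hr).adj (i, 1)
    · exact ((certW hr).adj (i, 5)).symm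
    · exact (certW hr).adj (i, 4)
    · exact (certW hr).adj (i, 0)
  hAA f i := by
    cases f
    · exact ((certW hr).adj (i, 2)).symm
    · exact (certW hr).adj (i, 2)
  hBB f i := by
    cases f
    · exact ((certW hr).adj (i, 3)).symm
    · exact (certW hr).adj (i, 3)
  hPA f i := by
    cases f
    · exact (certW hr).adj (i, 8)
    · exact (certW hr).adj (i, 6)
  hPB f i := by
    cases f
    · exact (certW hr).adj (i, 9)
    · exact (certW hr).adj (i, 7)
  hPX f i := by
    cases f
    · exact (certW hr).adj (i, 17)
    · exact (certW hr).adj (i, 16)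
  hXB f i := by
    cases f
    · exact (certW hr).adj (i, 11)
    · exact (certW hr).adj (i, 10)
  hXA f i := by
    cases f
    · exact (certW hr).adj (i, 13)
    · exact (certW hr).adj (i, 12)
  hBA f i := by
    cases f
    · exact (certW hr).adj (i, 15)
    · exact (certW hr).adj (i, 14)

/-- `ε` is a side of the kite of a crossing. -/
def Side (ε : Fin r × Fin 18) : Prop :=
  ∃ (γ δ : Fin r × Fin 18) (p q u v : W r), eX γ δ ∧ s(esrc ε, etgt ε) = s(p, q) ∧
    s(p, u) = s(esrc γ, etgt γ) ∧ s(q, v) = s(esrc δ, etgt δ)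

/-- the edge types of the skeleton -/
def sk (τ : Fin 18) : Prop := τ ≠ 4 ∧ τ ≠ 16 ∧ τ ≠ 17

instance : DecidablePred sk := fun τ => by unfold sk; infer_instance

theorem side_of_sk (ε : Fin r × Fin 18) (h : sk ε.2) : (∃ δ, eX ε δ) ∨ Side ε := by
  obtain ⟨i, τ⟩ := ε
  have hp : ∀ f : Bool, wA f i = wA f (i - 1 + 1) := by intro f; rw [sub_add_cancel]
  fin_cases τ
  · exact Or.inr ⟨(i, 4), (i, 5), wA true i, wB true i, wB false i, wA false i,
      ⟨rfl, rfl⟩, rfl, rfl, rfl⟩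
  · exact Or.inr ⟨(i, 5), (i, 4), wA false i, wB false i, wB true i, wA true i,
      ⟨rfl, rfl⟩, rfl, Sym2.eq_swap, Sym2.eq_swap⟩
  · exact Or.inr ⟨(i, 4), (i, 5), wA true i, wA false i, wB false i, wB true i,
      ⟨rfl, rfl⟩, rfl, rfl, Sym2.eq_swap⟩
  · exact Or.inr ⟨(i, 5), (i, 4), wB true i, wB false i, wA false i, wA true i,
      ⟨rfl, rfl⟩, rfl, rfl, Sym2.eq_swap⟩
  · exact absurd rfl h.1
  · exact Or.inl ⟨(i, 4), rfl, rfl⟩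
  · exact Or.inr ⟨(i - 1, 16), (i - 1, 14), wP true, wA true i, wX (i - 1), wB true (i - 1),
      ⟨rfl, rfl⟩, rfl, rfl, by rw [hp]; exact Sym2.eq_swap⟩
  · exact Or.inr ⟨(i, 16), (i, 14), wP true, wB true i, wX i, wA true (i + 1),
      ⟨rfl, rfl⟩, rfl, rfl, rfl⟩
  · exact Or.inr ⟨(i - 1, 17), (i - 1, 15), wP false, wA false i, wX (i - 1), wB false (i - 1),
      ⟨rfl, rfl⟩, rfl, rfl, by rw [hp]; exact Sym2.eq_swap⟩
  · exact Or.inr ⟨(i, 17), (i, 15), wP false, wB false i, wX i, wA false (i + 1),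
      ⟨rfl, rfl⟩, rfl, rfl, rfl⟩
  · exact Or.inr ⟨(i, 16), (i, 14), wX i, wB true i, wP true, wA true (i + 1),
      ⟨rfl, rfl⟩, rfl, Sym2.eq_swap, rfl⟩
  · exact Or.inr ⟨(i, 17), (i, 15), wX i, wB false i, wP false, wA false (i + 1),
      ⟨rfl, rfl⟩, rfl, Sym2.eq_swap, rfl⟩
  · exact Or.inr ⟨(i, 16), (i, 14), wX i, wA true (i + 1), wP true, wB true i,
      ⟨rfl, rfl⟩, rfl, Sym2.eq_swap, Sym2.eq_swap⟩
  · exact Or.inr ⟨(i, 17), (i, 15), wX i, wA false (i + 1), wP false, wB false i,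
      ⟨rfl, rfl⟩, rfl, Sym2.eq_swap, Sym2.eq_swap⟩
  · exact Or.inl ⟨(i, 16), rfl, rfl⟩
  · exact Or.inl ⟨(i, 17), rfl, rfl⟩
  · exact absurd rfl h.2.1
  · exact absurd rfl h.2.2

theorem sk_card : {τ : Fin 18 | sk τ}.ncard = 15 := by
  rw [Set.ncard_eq_toFinset_card']
  decide

theorem xp_card : {p : Fin 18 × Fin 18 | xp p.1 p.2 = true}.ncard = 6 := by
  rw [Set.ncard_eq_toFinset_card']
  decide +kernel

theorem sk_xp : ∀ τ σ : Fin 18, sk τ → sk σ → xp τ σ ≠ true := by decide +kernel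

theorem main (hr : 2 ≤ r) {U : Type} [Fintype U] (φ : W r ≃ U) :
    ∃ (G : SimpleGraph U) (D : Drawing G),
      D.IsMaximalOnePlane ∧ KConnected G 6 ∧ crossingNumber G = 3 * r := by
  have hU : Fintype.card U = 5 * r + 2 := by
    rw [← Fintype.card_congr φ]
    simp [W]
    ring
  have C := (certW hr).map φ
  have hes := C.edgeSet_eq
  have hinj := C.edge_inj
  set E : Fin r × Fin 18 → Sym2 U := fun ε => s((φ ∘ esrc) ε, (φ ∘ etgt) ε) with hE
  have hcr := C.cross_iff
  have hadj : ∀ {a b : U} {ε}, s(a, b) = E ε → (sG (φ ∘ esrc) (φ ∘ etgt)).Adj a b := by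
    intro a b ε h
    rw [← SimpleGraph.mem_edgeSet, hes]
    exact ⟨ε, h.symm⟩
  have hcount : (sG (φ ∘ esrc (r := r)) (φ ∘ etgt)).edgeSet.ncard = 18 * r := by
    rw [hes, ← Set.image_univ, Set.ncard_image_of_injective _ hinj, Set.ncard_univ]
    simp [Nat.mul_comm]
  refine ⟨sG (φ ∘ esrc) (φ ∘ etgt), sD (posW ∘ φ.symm) C.hpos _ _, ?_, ?_, ?_⟩
  · refine maximal_of_skeleton _ (by omega) C.good C.onePlanar (E '' {ε | sk ε.2}) ?_ ?_ ?_ ?_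
    · rw [hes]
      exact Set.image_subset_range _ _
    · rw [Set.ncard_image_of_injective _ hinj]
      have : {ε : Fin r × Fin 18 | sk ε.2} = Set.univ ×ˢ {τ | sk τ} := by
        ext; simp
      rw [this, Set.ncard_prod, sk_card, Set.ncard_univ, hU]
      simp
      omega
    · rintro _ ⟨ε, hε, rfl⟩ _ ⟨δ, hδ, rfl⟩ hc
      obtain ⟨ε', δ', h1, h2, h3⟩ := (hcr _ _).1 hc
      have h1 := hinj h1
      have h2 := hinj h2
      subst h1 h2
      exact sk_xp _ _ hε hδ h3.2
    · rintro _ ⟨ε, hε, rfl⟩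
      rcases side_of_sk ε hε with ⟨δ, hδ⟩ | ⟨γ, δ, p, q, u, v, hX, h1, h2, h3⟩
      · exact Or.inl ⟨E δ, (hcr _ _).2 ⟨ε, δ, rfl, rfl, hδ⟩⟩
      · have h1' : E ε = s(φ p, φ q) := congrArg (Sym2.map φ) h1
        have h2' : s(φ p, φ u) = E γ := congrArg (Sym2.map φ) h2
        have h3' : s(φ q, φ v) = E δ := congrArg (Sym2.map φ) h3
        exact Or.inr ⟨φ p, φ q, φ u, φ v, h1', hadj h2', hadj h3',
          (hcr _ _).2 ⟨γ, δ, h2', h3', hX⟩⟩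
  · refine kconn_map φ ?_ ((famW hr).kconn hr)
    intro u v h
    rw [← SimpleGraph.mem_edgeSet, (certW hr).edgeSet_eq] at h
    obtain ⟨ε, h⟩ := h
    exact hadj (ε := ε) (congrArg (Sym2.map φ) h.symm)
  · have lower : ∀ D : Drawing (sG (φ ∘ esrc (r := r)) (φ ∘ etgt)), D.IsGood → 3 * r ≤ D.crNum := by
      intro D hD
      have := crNum_lower D (by omega) hD
      rw [hcount, hU] at this
      omega
    have upper : (sD (posW ∘ φ.symm) C.hpos (φ ∘ esrc (r := r)) (φ ∘ etgt)).crNum ≤ 3 * r := by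
      have hsub : {p : Sym2 U × Sym2 U |
          (sD (posW ∘ φ.symm) C.hpos (φ ∘ esrc (r := r)) (φ ∘ etgt)).Cross p.1 p.2} ⊆
          (fun z : Fin r × (Fin 18 × Fin 18) => (E (z.1, z.2.1), E (z.1, z.2.2))) ''
          (Set.univ ×ˢ {p : Fin 18 × Fin 18 | xp p.1 p.2 = true}) := by
        rintro ⟨e, f⟩ h
        obtain ⟨⟨i, τ⟩, ⟨j, σ⟩, h1, h2, h3, h4⟩ := (hcr _ _).1 h
        simp only at h1 h2 h3 h4
        subst h3
        exact ⟨(i, (τ, σ)), ⟨trivial, h4⟩, Prod.ext h1.symm h2.symm⟩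
      have h1 := Set.ncard_le_ncard hsub (Set.toFinite _)
      have h2 := h1.trans (Set.ncard_image_le (Set.toFinite _))
      rw [Set.ncard_prod, xp_card, Set.ncard_univ] at h2
      simp at h2
      unfold Drawing.crNum
      omega
    have hg := C.good
    apply le_antisymm
    · exact le_trans (Nat.sInf_le (m := (sD (posW ∘ φ.symm) C.hpos (φ ∘ esrc (r := r)) (φ ∘ etgt)).crNum)
        ⟨_, hg, rfl⟩) upper
    · refine le_csInf ⟨_, _, hg, rfl⟩ ?_
      rintro n ⟨D, hD, rfl⟩
      exact lower D hD

end fam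

end VK
/-- For every `n = 5 · 2^(k+1) - 8` with `k ≥ 1`, there is a 6-connected
maximal 1-plane graph on `n` vertices with crossing number `(3/5)(n - 2)`. -/
theorem stmt_16 (k : ℕ) (hk : 1 ≤ k) :
    ∃ (G : SimpleGraph (Fin (5 * 2 ^ (k + 1) - 8))) (D : Drawing G),
      D.IsMaximalOnePlane ∧ KConnected G 6 ∧
      5 * crossingNumber G = 3 * (5 * 2 ^ (k + 1) - 8 - 2) := by
  obtain ⟨m, hm⟩ : ∃ m, 2 ^ k = m + 2 :=
    ⟨2 ^ k - 2, by have := Nat.pow_le_pow_right (n := 2) (by norm_num) hk; omega⟩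
  have hn : 5 * 2 ^ (k + 1) - 8 = 5 * (2 * m + 2) + 2 := by rw [pow_succ, hm]; omega
  obtain ⟨G, D, h1, h2, h3⟩ := VK.main (r := 2 * m + 2) (by omega)
    (Fintype.equivOfCardEq (by rw [hn]; simp [VK.W]; ring) : VK.W (2 * m + 2) ≃ Fin (5 * 2 ^ (k + 1) - 8))
  refine ⟨G, D, h1, h2, ?_⟩
  rw [h3, hn]
  omega
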